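/- arXiv:1211.6499 — 3 statements merged into one kernel-verified Lean document; each statement's English description precedes it below -/
import Mathlib

section
/- Lemma 2.1(ii): Let (u,v) be a classical solution of problem (1.1) on [0,T), written in radial coordinates as u(r,t), v(r,t). Then the radial derivatives satisfy u_r(r,t) ≥ 0 and v_r(r,t) ≥ 0 for all (r,t) ∈ [0,R] × (0,T). -/
/-!
The proof uses only the maximum principle in the form of a first-contact argument
(`exists_first_contact`, `pos_of_no_contact`), so no regularity beyond `C²` in space and
differentiability in time is needed; in particular the equation is never differentiated in `r`.

*Radial symmetry* (`solution_radial`). For a linear isometry `A`, the differences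
`u(Ax,t) - u(x,t)` and `v(Ax,t) - v(x,t)` start nonnegative and satisfy a linear cooperative
system with cooperative flux boundary conditions. Adding the barrier `ε e^{Kt} e^{α|x|²}`, with
`α` large enough to dominate the boundary flux and `K` large enough to dominate the reaction and
the Laplacian of the barrier, neither sum can be the first to vanish (`rotGap_no_contact`). Hence
`u(x,t) ≤ u(Ax,t)`, and applying this to reflections exchanging two points of equal norm gives
equality.

*Monotonicity* (`solution_mono`). On the pairs `(x,y)` with `|x| ≤ |y| ≤ R`, the function
`u(y,t) - u(x,t)` solves a heat equation in the doubled variable `(x,y)` with a cooperative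
source, vanishes where `|x| = |y|` by radial symmetry, and has positive normal derivative
`e^{v(y,t)}` where `|y| = R`. After adding `ε e^{Kt}`, a first zero is impossible
(`pairGap_no_contact`). Hence `u(·,t)` and `v(·,t)` are nondecreasing in `|x|`, and their radial
derivatives are nonnegative.
-/

open Set Real Metric MeasureTheory Filter Topology

/-- The Euclidean Laplacian of `f : ℝⁿ → ℝ` at `x`, computed as the sum of second
directional derivatives along the coordinate directions. -/
noncomputable def lap {n : ℕ} (f : EuclideanSpace ℝ (Fin n) → ℝ)
    (x : EuclideanSpace ℝ (Fin n)) : ℝ :=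
  ∑ i : Fin n, iteratedDeriv 2 (fun s : ℝ => f (x + s • EuclideanSpace.single i (1 : ℝ))) 0

/-- The outward normal derivative `∇f · (x/R)` on the sphere of radius `R`. -/
noncomputable def normalDeriv {n : ℕ} (R : ℝ) (f : EuclideanSpace ℝ (Fin n) → ℝ)
    (x : EuclideanSpace ℝ (Fin n)) : ℝ :=
  deriv (fun s : ℝ => f (x + s • (R⁻¹ • x))) 0

/-- Admissible initial data for problem (1.1): nonnegative, smooth, radial with
nondecreasing radial profiles, and satisfying the compatibility conditions. -/
structure AdmissibleData (n : ℕ) (R : ℝ)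
    (u₀ v₀ : EuclideanSpace ℝ (Fin n) → ℝ) : Prop where
  u0_nonneg : ∀ x ∈ closedBall (0 : EuclideanSpace ℝ (Fin n)) R, 0 ≤ u₀ x
  v0_nonneg : ∀ x ∈ closedBall (0 : EuclideanSpace ℝ (Fin n)) R, 0 ≤ v₀ x
  u0_smooth : ContDiffOn ℝ (⊤ : ℕ∞) u₀ (closedBall (0 : EuclideanSpace ℝ (Fin n)) R)
  v0_smooth : ContDiffOn ℝ (⊤ : ℕ∞) v₀ (closedBall (0 : EuclideanSpace ℝ (Fin n)) R)
  u0_radial_mono : ∀ x ∈ closedBall (0 : EuclideanSpace ℝ (Fin n)) R,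
    ∀ y ∈ closedBall (0 : EuclideanSpace ℝ (Fin n)) R, ‖x‖ ≤ ‖y‖ → u₀ x ≤ u₀ y
  v0_radial_mono : ∀ x ∈ closedBall (0 : EuclideanSpace ℝ (Fin n)) R,
    ∀ y ∈ closedBall (0 : EuclideanSpace ℝ (Fin n)) R, ‖x‖ ≤ ‖y‖ → v₀ x ≤ v₀ y
  compat_u : ∀ x : EuclideanSpace ℝ (Fin n), ‖x‖ = R → normalDeriv R u₀ x = Real.exp (v₀ x)
  compat_v : ∀ x : EuclideanSpace ℝ (Fin n), ‖x‖ = R → normalDeriv R v₀ x = Real.exp (u₀ x)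
  compat_u' : ∀ x ∈ closedBall (0 : EuclideanSpace ℝ (Fin n)) R, 0 ≤ lap u₀ x + Real.exp (v₀ x)
  compat_v' : ∀ x ∈ closedBall (0 : EuclideanSpace ℝ (Fin n)) R, 0 ≤ lap v₀ x + Real.exp (u₀ x)

/-- A classical solution of problem (1.1) on `[0,T)` on the ball of radius `R`:
continuous on `cl(B_R) × [0,T)`, of class C²,¹ on `cl(B_R) × (0,T)`, satisfying the
equations `u_t = Δu + λ₁ e^v`, `v_t = Δv + λ₂ e^u` in `B_R × (0,T)`, the boundary
conditions `∂u/∂η = e^v`, `∂v/∂η = e^u` on `∂B_R × (0,T)`, and the initial conditions. -/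
structure IsClassicalSolution (n : ℕ) (R T lam1 lam2 : ℝ)
    (u v : EuclideanSpace ℝ (Fin n) → ℝ → ℝ)
    (u₀ v₀ : EuclideanSpace ℝ (Fin n) → ℝ) : Prop where
  cont_u : ContinuousOn (fun p : EuclideanSpace ℝ (Fin n) × ℝ => u p.1 p.2)
    ((closedBall (0 : EuclideanSpace ℝ (Fin n)) R) ×ˢ Ico (0 : ℝ) T)
  cont_v : ContinuousOn (fun p : EuclideanSpace ℝ (Fin n) × ℝ => v p.1 p.2)
    ((closedBall (0 : EuclideanSpace ℝ (Fin n)) R) ×ˢ Ico (0 : ℝ) T)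
  reg_space_u : ∀ t ∈ Ioo (0 : ℝ) T,
    ContDiffOn ℝ 2 (fun x => u x t) (closedBall (0 : EuclideanSpace ℝ (Fin n)) R)
  reg_space_v : ∀ t ∈ Ioo (0 : ℝ) T,
    ContDiffOn ℝ 2 (fun x => v x t) (closedBall (0 : EuclideanSpace ℝ (Fin n)) R)
  reg_time_u : ∀ x ∈ closedBall (0 : EuclideanSpace ℝ (Fin n)) R, ∀ t ∈ Ioo (0 : ℝ) T,
    DifferentiableAt ℝ (u x) t
  reg_time_v : ∀ x ∈ closedBall (0 : EuclideanSpace ℝ (Fin n)) R, ∀ t ∈ Ioo (0 : ℝ) T,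
    DifferentiableAt ℝ (v x) t
  pde_u : ∀ x ∈ ball (0 : EuclideanSpace ℝ (Fin n)) R, ∀ t ∈ Ioo (0 : ℝ) T,
    deriv (u x) t = lap (fun y => u y t) x + lam1 * Real.exp (v x t)
  pde_v : ∀ x ∈ ball (0 : EuclideanSpace ℝ (Fin n)) R, ∀ t ∈ Ioo (0 : ℝ) T,
    deriv (v x) t = lap (fun y => v y t) x + lam2 * Real.exp (u x t)
  bc_u : ∀ x : EuclideanSpace ℝ (Fin n), ‖x‖ = R → ∀ t ∈ Ioo (0 : ℝ) T,
    normalDeriv R (fun y => u y t) x = Real.exp (v x t)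
  bc_v : ∀ x : EuclideanSpace ℝ (Fin n), ‖x‖ = R → ∀ t ∈ Ioo (0 : ℝ) T,
    normalDeriv R (fun y => v y t) x = Real.exp (u x t)
  init_u : ∀ x ∈ closedBall (0 : EuclideanSpace ℝ (Fin n)) R, u x 0 = u₀ x
  init_v : ∀ x ∈ closedBall (0 : EuclideanSpace ℝ (Fin n)) R, v x 0 = v₀ x

/-- `(u,v)` blows up at time `T`: `limsup_{t→T⁻} sup_{cl(B_R)} (u(·,t) + v(·,t)) = ∞`. -/
def BlowsUpAt (n : ℕ) (R T : ℝ) (u v : EuclideanSpace ℝ (Fin n) → ℝ → ℝ) : Prop :=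
  ∀ M : ℝ, ∃ᶠ t in 𝓝[<] T, ∃ x ∈ closedBall (0 : EuclideanSpace ℝ (Fin n)) R, M < u x t + v x t

/-! ### One-variable and Laplacian calculus -/

/-- If `φ` lies above `φ a` to the left of `a`, then `φ' a ≤ 0`. Used both for the time
variable at a first contact time and for the normal direction at a boundary contact point. -/
lemma deriv_nonpos_of_left_min {φ : ℝ → ℝ} {a d : ℝ} (h : HasDerivAt φ d a)
    (hmin : ∀ᶠ s in 𝓝[<] a, φ a ≤ φ s) : d ≤ 0 := by
  have h1 := (hasDerivWithinAt_iff_tendsto_slope' (s := Iio a) (by simp)).1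
    h.hasDerivWithinAt
  refine le_of_tendsto h1 ?_
  filter_upwards [hmin, self_mem_nhdsWithin] with s hs hsa
  rw [slope_def_field]
  exact div_nonpos_of_nonneg_of_nonpos (by linarith) (by linarith [mem_Iio.1 hsa])

lemma second_deriv_nonneg_of_localMin {φ : ℝ → ℝ} {a : ℝ} (hc : ContinuousAt φ a)
    (hmin : IsLocalMin φ a) : 0 ≤ iteratedDeriv 2 φ a := by
  rw [iteratedDeriv_succ, iteratedDeriv_one]
  by_contra! hneg
  have hmax := isLocalMax_of_deriv_deriv_neg hneg hmin.deriv_eq_zero hc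
  -- `φ` has a local minimum and a local maximum at `a`, so it is constant near `a`
  have heq : φ =ᶠ[𝓝 a] fun _ => φ a := by
    filter_upwards [hmin, hmax] with y h1 h2 using le_antisymm h2 h1
  have h2 := heq.deriv.deriv_eq
  simp at h2
  linarith

lemma iteratedDeriv_two_line {E : Type*} [NormedAddCommGroup E] [NormedSpace ℝ E]
    {f : E → ℝ} {x : E} (hf : ContDiffAt ℝ 2 f x) (e : E) :
    iteratedDeriv 2 (fun s : ℝ => f (x + s • e)) 0 = iteratedFDeriv ℝ 2 f x ![e, e] := by
  rw [iteratedDeriv_succ, iteratedDeriv_one, iteratedFDeriv_two_apply]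
  have hline : ∀ s : ℝ, HasDerivAt (fun s : ℝ => x + s • e) e s := fun s => by
    simpa using ((hasDerivAt_id s).smul_const e).const_add x
  have hcont : ContinuousAt (fun s : ℝ => x + s • e) 0 := (hline 0).continuousAt
  have h0 : x + (0 : ℝ) • e = x := by simp
  have hev : ∀ᶠ y in 𝓝 x, DifferentiableAt ℝ f y := by
    filter_upwards [hf.eventually (by simp)] with y hy
    exact hy.differentiableAt (by norm_num)
  have hd : deriv (fun s : ℝ => f (x + s • e)) =ᶠ[𝓝 0] fun s => fderiv ℝ f (x + s • e) e := by
    have : ∀ᶠ s : ℝ in 𝓝 0, DifferentiableAt ℝ f (x + s • e) := by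
      refine hcont.eventually (p := fun y => DifferentiableAt ℝ f y) ?_
      simpa using hev
    filter_upwards [this] with s hs
    exact (hs.hasFDerivAt.comp_hasDerivAt s (hline s)).deriv
  rw [hd.deriv_eq]
  have hf' : DifferentiableAt ℝ (fderiv ℝ f) (x + (0 : ℝ) • e) := by
    rw [h0]
    exact (hf.fderiv_right (m := 1) (by norm_num)).differentiableAt (by norm_num)
  have h1 : HasDerivAt (fun s : ℝ => fderiv ℝ f (x + s • e))
      (fderiv ℝ (fderiv ℝ f) (x + (0 : ℝ) • e) e) 0 :=
    hf'.hasFDerivAt.comp_hasDerivAt (0 : ℝ) (hline 0)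
  rw [(h1.clm_apply (hasDerivAt_const (0 : ℝ) e)).deriv, h0]
  simp

section
variable {n : ℕ}

lemma lap_comp_isometry {f : EuclideanSpace ℝ (Fin n) → ℝ}
    (A : EuclideanSpace ℝ (Fin n) ≃ₗᵢ[ℝ] EuclideanSpace ℝ (Fin n))
    {x : EuclideanSpace ℝ (Fin n)} (hf : ContDiffAt ℝ 2 f (A x)) :
    lap (fun y => f (A y)) x = Laplacian.laplacian f (A x) := by
  rw [InnerProductSpace.laplacian_eq_iteratedFDeriv_orthonormalBasis f
    ((EuclideanSpace.basisFun (Fin n) ℝ).map A)]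
  simp only [lap]
  refine Finset.sum_congr rfl fun i _ => ?_
  rw [← iteratedDeriv_two_line hf]
  simp

lemma lap_eq_laplacian {f : EuclideanSpace ℝ (Fin n) → ℝ}
    {x : EuclideanSpace ℝ (Fin n)} (hf : ContDiffAt ℝ 2 f x) :
    lap f x = Laplacian.laplacian f x :=
  lap_comp_isometry (LinearIsometryEquiv.refl ℝ _) hf

lemma lap_nonneg_of_localMin {f : EuclideanSpace ℝ (Fin n) → ℝ}
    {x : EuclideanSpace ℝ (Fin n)} (hf : ContinuousAt f x) (hmin : IsLocalMin f x) :
    0 ≤ lap f x := by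
  refine Finset.sum_nonneg fun i _ => ?_
  have hc : ContinuousAt (fun s : ℝ => x + s • EuclideanSpace.single i (1 : ℝ)) 0 := by fun_prop
  have h0 : x + (0 : ℝ) • EuclideanSpace.single i (1 : ℝ) = x := by simp
  apply second_deriv_nonneg_of_localMin
  · exact ContinuousAt.comp (g := f) (by rwa [h0]) hc
  · have : ∀ᶠ y in 𝓝 (x + (0 : ℝ) • EuclideanSpace.single i (1 : ℝ)), f x ≤ f y := by
      rw [h0]; exact hmin
    filter_upwards [hc.eventually this] with s hs
    simpa using hs

lemma lap_nonpos_of_localMax {f : EuclideanSpace ℝ (Fin n) → ℝ}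
    {x : EuclideanSpace ℝ (Fin n)} (hf : ContDiffAt ℝ 2 f x) (hmax : IsLocalMax f x) :
    lap f x ≤ 0 := by
  have h := lap_nonneg_of_localMin (f := -f) hf.continuousAt.neg hmax.neg
  have hn : ContDiffAt ℝ 2 (-f) x := hf.neg
  rw [lap_eq_laplacian hn, InnerProductSpace.laplacian_neg, Pi.neg_apply,
    ← lap_eq_laplacian hf] at h
  linarith

lemma lap_sub_add_mul {f g h : EuclideanSpace ℝ (Fin n) → ℝ} {x : EuclideanSpace ℝ (Fin n)}
    (c : ℝ) (hf : ContDiffAt ℝ 2 f x) (hg : ContDiffAt ℝ 2 g x) (hh : ContDiffAt ℝ 2 h x) :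
    lap (fun y => f y - g y + c * h y) x = lap f x - lap g x + c * lap h x := by
  have hch : ContDiffAt ℝ 2 (c • h) x := contDiffAt_const.smul hh
  have e : (fun y => f y - g y + c * h y) = (f - g) + c • h := by ext; simp
  have hfg : ContDiffAt ℝ 2 (f - g) x := hf.sub hg
  have hsum : ContDiffAt ℝ 2 (f - g + c • h) x := hfg.add hch
  rw [e, lap_eq_laplacian hsum, hfg.laplacian_add hch,
    hf.laplacian_sub hg, InnerProductSpace.laplacian_smul c hh,
    lap_eq_laplacian hf, lap_eq_laplacian hg, lap_eq_laplacian hh, smul_eq_mul]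

lemma lap_gaussian (α : ℝ) (x : EuclideanSpace ℝ (Fin n)) :
    lap (fun y => Real.exp (α * ‖y‖ ^ 2)) x =
      (2 * α * n + 4 * α ^ 2 * ‖x‖ ^ 2) * Real.exp (α * ‖x‖ ^ 2) := by
  have key : ∀ i : Fin n, iteratedDeriv 2 (fun s : ℝ =>
      Real.exp (α * ‖x + s • EuclideanSpace.single i (1 : ℝ)‖ ^ 2)) 0 =
      (2 * α + 4 * α ^ 2 * (x i) ^ 2) * Real.exp (α * ‖x‖ ^ 2) := by
    intro i
    have e1 : (fun s : ℝ => Real.exp (α * ‖x + s • EuclideanSpace.single i (1 : ℝ)‖ ^ 2)) =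
        fun s => Real.exp (α * (‖x‖ ^ 2 + 2 * s * x i + s ^ 2)) := by
      ext s
      rw [norm_add_sq_real, inner_smul_right, norm_smul]
      simp only [EuclideanSpace.inner_single_right, PiLp.norm_single, one_mul, mul_one,
        Real.norm_eq_abs, sq_abs, conj_trivial, abs_one]
      ring_nf
    have hq : ∀ s : ℝ, HasDerivAt (fun s : ℝ => α * (‖x‖ ^ 2 + 2 * s * x i + s ^ 2))
        (α * (2 * x i + 2 * s)) s := by
      intro s
      have h1 : HasDerivAt (fun s : ℝ => 2 * s * x i) (2 * 1 * x i) s :=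
        ((hasDerivAt_id s).const_mul 2).mul_const (x i)
      have h2 := (((h1.const_add (‖x‖ ^ 2)).add (hasDerivAt_pow 2 s)).const_mul α)
      refine h2.congr_deriv ?_
      norm_num
    have hE := fun s => (hq s).exp
    rw [e1, iteratedDeriv_succ, iteratedDeriv_one, deriv_eq hE]
    have hl : HasDerivAt (fun s : ℝ => α * (2 * x i + 2 * s)) (α * (2 * 1)) 0 :=
      (((hasDerivAt_id (0 : ℝ)).const_mul 2).const_add _).const_mul α
    refine ((hE 0).fun_mul hl).deriv.trans ?_
    simp only [mul_zero, zero_mul, add_zero, ne_eq, OfNat.ofNat_ne_zero, not_false_eq_true,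
      zero_pow]
    ring
  simp only [lap, key, ← Finset.sum_mul, Finset.sum_add_distrib, ← Finset.mul_sum,
    EuclideanSpace.norm_sq_eq (x := x), Finset.sum_const, Finset.card_univ, Fintype.card_fin,
    nsmul_eq_mul, Real.norm_eq_abs, sq_abs]
  ring

/-- A positive normal derivative is not the junk value of `deriv`, so the function is
differentiable along the normal. -/
lemma hasDerivAt_of_normalDeriv {R c : ℝ} {f : EuclideanSpace ℝ (Fin n) → ℝ}
    {x : EuclideanSpace ℝ (Fin n)} (h : normalDeriv R f x = Real.exp c) :
    HasDerivAt (fun s : ℝ => f (x + s • (R⁻¹ • x))) (Real.exp c) 0 := by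
  rw [← h]
  refine (differentiableAt_of_deriv_ne_zero ?_).hasDerivAt
  change normalDeriv R f x ≠ 0
  rw [h]; exact (Real.exp_pos c).ne'

lemma norm_add_normal {R : ℝ} (hR : 0 < R) {x : EuclideanSpace ℝ (Fin n)} (hx : ‖x‖ = R)
    {s : ℝ} (hs : -R ≤ s) : ‖x + s • (R⁻¹ • x)‖ = R + s := by
  have : x + s • (R⁻¹ • x) = (1 + s * R⁻¹) • x := by rw [add_smul, one_smul, mul_smul]
  have h1 : 0 ≤ 1 + s * R⁻¹ := by
    have : 1 + s * R⁻¹ = (R + s) * R⁻¹ := by field_simp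
    rw [this]; exact mul_nonneg (by linarith) (inv_nonneg.2 hR.le)
  rw [‹x + _ = _›, norm_smul, hx, Real.norm_of_nonneg h1]
  field_simp

end

/-! ### First contact for cooperative pairs -/

/-- A continuous function on `K × [0,τ]`, `K` compact, that is positive at time `0` but not
everywhere, vanishes at some first time `t₀ > 0`. -/
lemma exists_first_contact {X : Type*} [TopologicalSpace X] {K : Set X} (hK : IsCompact K)
    {τ : ℝ} {P : X → ℝ → ℝ}
    (hP : ContinuousOn (fun p : X × ℝ => P p.1 p.2) (K ×ˢ Icc 0 τ))
    (h0 : ∀ x ∈ K, 0 < P x 0) (hbad : ∃ x ∈ K, ∃ t ∈ Icc 0 τ, P x t ≤ 0) :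
    ∃ t₀ ∈ Ioc 0 τ, ∃ x₀ ∈ K, P x₀ t₀ = 0 ∧ ∀ x ∈ K, ∀ s ∈ Icc 0 t₀, 0 ≤ P x s := by
  let f : K × Icc (0 : ℝ) τ → ℝ := fun p => P p.1 p.2
  have hf : Continuous f := by
    rw [continuousOn_iff_continuous_domRestrict] at hP
    exact hP.comp (f := fun p : K × Icc (0 : ℝ) τ =>
      (⟨((p.1 : X), (p.2 : ℝ)), p.1.2, p.2.2⟩ : ↥(K ×ˢ Icc 0 τ))) (by fun_prop)
  have : CompactSpace K := isCompact_iff_compactSpace.1 hK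
  have hS : IsCompact {p | f p ≤ 0} := (isClosed_le hf continuous_const).isCompact
  obtain ⟨x, hx, t, ht, hxt⟩ := hbad
  obtain ⟨⟨x₀, t₀⟩, hp, hmin⟩ := hS.exists_isMinOn ⟨(⟨x, hx⟩, ⟨t, ht⟩), hxt⟩
    (f := fun p => (p.2 : ℝ)) (by fun_prop)
  have hp' : P x₀ t₀ ≤ 0 := hp
  have hpos : ∀ y ∈ K, ∀ s ∈ Icc (0 : ℝ) τ, s < t₀ → 0 < P y s := by
    intro y hy s hs hst
    by_contra! hcon
    have := hmin (show ((⟨y, hy⟩, ⟨s, hs⟩) : K × Icc (0 : ℝ) τ) ∈ {p | f p ≤ 0} from hcon)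
    simp at this
    exact absurd hst (not_lt.2 this)
  have ht0 : (0 : ℝ) < t₀ := by
    rcases t₀.2.1.eq_or_lt with h | h
    · have := h0 x₀ x₀.2
      rw [h] at this; linarith
    · exact h
  have hnn : ∀ y ∈ K, ∀ s ∈ Icc (0 : ℝ) t₀, 0 ≤ P y s := by
    intro y hy s hs
    rcases hs.2.lt_or_eq with h | h
    · exact (hpos y hy s ⟨hs.1, hs.2.trans t₀.2.2⟩ h).le
    · -- at the contact time itself, pass to the limit from earlier times
      subst h
      have hc : ContinuousWithinAt (fun r => P y r) (Ico 0 (t₀ : ℝ)) t₀ := by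
        have h1 : ContinuousWithinAt (fun p : X × ℝ => P p.1 p.2) (K ×ˢ Icc 0 τ) (y, (t₀ : ℝ)) :=
          hP (y, (t₀ : ℝ)) ⟨hy, t₀.2⟩
        exact h1.comp (f := fun r : ℝ => (y, r)) (by fun_prop)
          (fun r hr => ⟨hy, hr.1, hr.2.le.trans t₀.2.2⟩)
      have : (𝓝[Ico 0 (t₀ : ℝ)] (t₀ : ℝ)).NeBot := by
        rw [nhdsWithin_Ico_eq_nhdsLT ht0]; infer_instance
      refine ge_of_tendsto hc ?_
      filter_upwards [self_mem_nhdsWithin] with r hr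
      exact (hpos y hy r ⟨hr.1, hr.2.le.trans t₀.2.2⟩ hr.2).le
  exact ⟨t₀, ⟨ht0, t₀.2.2⟩, x₀, x₀.2, le_antisymm hp' (hnn x₀ x₀.2 t₀ ⟨ht0.le, le_rfl⟩), hnn⟩

/-- Two functions positive at time `0` remain positive if neither can be the first to vanish. -/
lemma pos_of_no_contact {X : Type*} [TopologicalSpace X] {K : Set X} (hK : IsCompact K)
    {τ : ℝ} {W Z : X → ℝ → ℝ}
    (hW : ContinuousOn (fun p : X × ℝ => W p.1 p.2) (K ×ˢ Icc 0 τ))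
    (hZ : ContinuousOn (fun p : X × ℝ => Z p.1 p.2) (K ×ˢ Icc 0 τ))
    (hW0 : ∀ x ∈ K, 0 < W x 0) (hZ0 : ∀ x ∈ K, 0 < Z x 0)
    (hWc : ∀ t₀ ∈ Ioc 0 τ, ∀ x₀ ∈ K, W x₀ t₀ = 0 →
      (∀ x ∈ K, ∀ s ∈ Icc 0 t₀, 0 ≤ W x s) → (∀ x ∈ K, ∀ s ∈ Icc 0 t₀, 0 ≤ Z x s) → False)
    (hZc : ∀ t₀ ∈ Ioc 0 τ, ∀ x₀ ∈ K, Z x₀ t₀ = 0 →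
      (∀ x ∈ K, ∀ s ∈ Icc 0 t₀, 0 ≤ Z x s) → (∀ x ∈ K, ∀ s ∈ Icc 0 t₀, 0 ≤ W x s) → False) :
    ∀ x ∈ K, ∀ t ∈ Icc 0 τ, 0 < W x t ∧ 0 < Z x t := by
  by_contra! hcon
  obtain ⟨x, hx, t, ht, hxt⟩ := hcon
  obtain ⟨t₀, ht₀, x₀, hx₀, h1, h2⟩ := exists_first_contact hK
    (P := fun x t => min (W x t) (Z x t)) (hW.inf hZ)
    (fun x hx => lt_min (hW0 x hx) (hZ0 x hx))
    ⟨x, hx, t, ht, by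
      rcases le_or_gt (W x t) 0 with h | h
      · exact (min_le_left _ _).trans h
      · exact (min_le_right _ _).trans (hxt h)⟩
  have hWn : ∀ x ∈ K, ∀ s ∈ Icc 0 t₀, 0 ≤ W x s := fun x hx s hs =>
    (h2 x hx s hs).trans (min_le_left _ _)
  have hZn : ∀ x ∈ K, ∀ s ∈ Icc 0 t₀, 0 ≤ Z x s := fun x hx s hs =>
    (h2 x hx s hs).trans (min_le_right _ _)
  rcases min_choice (W x₀ t₀) (Z x₀ t₀) with h | h
  · exact hWc t₀ ht₀ x₀ hx₀ (by rw [← h]; exact h1) hWn hZn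
  · exact hZc t₀ ht₀ x₀ hx₀ (by rw [← h]; exact h1) hZn hWn

/-! ### Radial symmetry -/

section
variable {n : ℕ} {R T lam1 lam2 : ℝ} {u v : EuclideanSpace ℝ (Fin n) → ℝ → ℝ}
  {u₀ v₀ : EuclideanSpace ℝ (Fin n) → ℝ}

lemma IsClassicalSolution.swap (h : IsClassicalSolution n R T lam1 lam2 u v u₀ v₀) :
    IsClassicalSolution n R T lam2 lam1 v u v₀ u₀ :=
  ⟨h.cont_v, h.cont_u, h.reg_space_v, h.reg_space_u, h.reg_time_v, h.reg_time_u,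
    h.pde_v, h.pde_u, h.bc_v, h.bc_u, h.init_v, h.init_u⟩

/-- Convexity bound for the exponential nonlinearity under a lower bound on the difference. -/
lemma exp_sub_exp_ge {a b L d : ℝ} (hL : Real.exp b ≤ L) (hd : 0 ≤ d) (hab : -d ≤ a - b) :
    -(L * d) ≤ Real.exp a - Real.exp b := by
  have h1 : a - b + 1 ≤ Real.exp (a - b) := Real.add_one_le_exp _
  have h2 : Real.exp a = Real.exp b * Real.exp (a - b) := by rw [← Real.exp_add]; congr 1; ring
  nlinarith [Real.exp_pos b]

lemma IsClassicalSolution.contDiffAt_u (h : IsClassicalSolution n R T lam1 lam2 u v u₀ v₀)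
    {x : EuclideanSpace ℝ (Fin n)} (hx : ‖x‖ < R) {t : ℝ} (ht : t ∈ Ioo 0 T) :
    ContDiffAt ℝ 2 (fun y => u y t) x :=
  (h.reg_space_u t ht).contDiffAt (closedBall_mem_nhds_of_mem (by simpa using hx))

/-- The solution is bounded on `cl(B_R) × [0,τ]`, so the exponentials are too. -/
lemma IsClassicalSolution.exists_exp_bound (h : IsClassicalSolution n R T lam1 lam2 u v u₀ v₀)
    {τ : ℝ} (hτ : τ < T) :
    ∃ L : ℝ, 0 < L ∧ ∀ x ∈ closedBall (0 : EuclideanSpace ℝ (Fin n)) R, ∀ t ∈ Icc 0 τ,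
      Real.exp (u x t) ≤ L ∧ Real.exp (v x t) ≤ L := by
  have hc : IsCompact ((closedBall (0 : EuclideanSpace ℝ (Fin n)) R) ×ˢ Icc (0 : ℝ) τ) :=
    (isCompact_closedBall _ _).prod isCompact_Icc
  have hsub : (closedBall (0 : EuclideanSpace ℝ (Fin n)) R) ×ˢ Icc (0 : ℝ) τ ⊆
      (closedBall (0 : EuclideanSpace ℝ (Fin n)) R) ×ˢ Ico (0 : ℝ) T :=
    prod_mono subset_rfl (Icc_subset_Ico_right hτ)
  obtain ⟨a, ha⟩ := hc.bddAbove_image (h.cont_u.mono hsub)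
  obtain ⟨b, hb⟩ := hc.bddAbove_image (h.cont_v.mono hsub)
  refine ⟨Real.exp (max a b), Real.exp_pos _, fun x hx t ht => ⟨?_, ?_⟩⟩
  · exact Real.exp_le_exp.2 ((ha (mem_image_of_mem _ (show (x, t) ∈ _ from ⟨hx, ht⟩))).trans
      (le_max_left _ _))
  · exact Real.exp_le_exp.2 ((hb (mem_image_of_mem _ (show (x, t) ∈ _ from ⟨hx, ht⟩))).trans
      (le_max_right _ _))

/-- The difference between a rotated copy of `u` and `u`, raised by a small barrier that grows
exponentially in time and whose normal derivative on the sphere is `2αR` times its value. -/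
noncomputable def rotGap (A : EuclideanSpace ℝ (Fin n) ≃ₗᵢ[ℝ] EuclideanSpace ℝ (Fin n))
    (ε K α : ℝ) (u : EuclideanSpace ℝ (Fin n) → ℝ → ℝ) (x : EuclideanSpace ℝ (Fin n))
    (t : ℝ) : ℝ :=
  u (A x) t - u x t + ε * Real.exp (K * t) * Real.exp (α * ‖x‖ ^ 2)

/-- `rotGap` of `u` cannot vanish first: at a boundary contact point the normal
derivative of the barrier beats the Lipschitz bound `L` of the boundary flux,
at an interior one its growth rate `K` beats the reaction term and the Laplacian of the barrier. -/
lemma rotGap_no_contact (hR : 0 < R) (hlam1 : 0 < lam1)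
    (hsol : IsClassicalSolution n R T lam1 lam2 u v u₀ v₀)
    (A : EuclideanSpace ℝ (Fin n) ≃ₗᵢ[ℝ] EuclideanSpace ℝ (Fin n))
    {L K ε α : ℝ} (hL : 0 < L) (hα : α * R = L) (hε : 0 < ε)
    (hK : lam1 * L + (2 * α * n + 4 * α ^ 2 * R ^ 2) < K)
    {t₀ : ℝ} (ht₀ : t₀ ∈ Ioo 0 T) {x₀ : EuclideanSpace ℝ (Fin n)}
    (hx₀ : x₀ ∈ closedBall (0 : EuclideanSpace ℝ (Fin n)) R) (hLv : Real.exp (v x₀ t₀) ≤ L)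
    (hW0 : rotGap A ε K α u x₀ t₀ = 0)
    (hW : ∀ x ∈ closedBall (0 : EuclideanSpace ℝ (Fin n)) R, ∀ s ∈ Icc 0 t₀,
      0 ≤ rotGap A ε K α u x s)
    (hZ : 0 ≤ rotGap A ε K α v x₀ t₀) : False := by
  have hxR : ‖x₀‖ ≤ R := by simpa using hx₀
  have ht0 : t₀ ∈ Icc 0 t₀ := ⟨ht₀.1.le, le_rfl⟩
  set δ : ℝ := ε * Real.exp (K * t₀) with hδ
  have hδ0 : 0 < δ := by positivity
  set h : EuclideanSpace ℝ (Fin n) → ℝ := fun x => Real.exp (α * ‖x‖ ^ 2) with hh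
  have hh0 : 0 < h x₀ := Real.exp_pos _
  have hdh : 0 < δ * h x₀ := mul_pos hδ0 hh0
  have hexp : -(L * (δ * h x₀)) ≤ Real.exp (v (A x₀) t₀) - Real.exp (v x₀ t₀) := by
    refine exp_sub_exp_ge hLv hdh.le ?_
    simp only [rotGap] at hZ
    linarith
  rcases hxR.eq_or_lt with hb | hi
  · -- contact on the sphere
    have hd1 := hasDerivAt_of_normalDeriv (hsol.bc_u (A x₀) (by simpa using hb) t₀ ht₀)
    have hd2 := hasDerivAt_of_normalDeriv (hsol.bc_u x₀ hb t₀ ht₀)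
    have hd3 : HasDerivAt (fun s : ℝ => Real.exp (α * (R + s) ^ 2))
        (2 * α * R * h x₀) 0 := by
      have h1 : HasDerivAt (fun s : ℝ => (R + s) ^ 2) (2 * R) 0 := by
        simpa using ((hasDerivAt_id' (0 : ℝ)).const_add R).fun_pow 2
      refine (h1.const_mul α).exp.congr_deriv ?_
      simp only [hh, hb, add_zero]
      ring
    have hd := (hd1.sub hd2).add (hd3.const_mul δ)
    have hle := deriv_nonpos_of_left_min hd (by
      have hR' : Ioo (-R) 0 ∈ 𝓝[<] (0 : ℝ) := Ioo_mem_nhdsLT (by linarith)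
      filter_upwards [hR'] with s hs
      have hn := norm_add_normal hR hb (s := s) hs.1.le
      have hWs := hW (x₀ + s • (R⁻¹ • x₀))
        (by rw [mem_closedBall_zero_iff, hn]; linarith [hs.2]) t₀ ht0
      simp only [rotGap, hn, map_add, map_smul] at hWs
      simp only [rotGap, hb] at hW0
      simp only [Pi.add_apply, Pi.sub_apply, zero_smul, add_zero]
      linarith)
    have : δ * (2 * α * R * h x₀) = 2 * L * (δ * h x₀) := by rw [← hα]; ring
    nlinarith
  · -- interior contact
    have hiA : ‖A x₀‖ < R := by simpa using hi
    have hcA := hsol.contDiffAt_u hiA ht₀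
    have hcA' : ContDiffAt ℝ 2 (fun y => u (A y) t₀) x₀ :=
      ContDiffAt.comp x₀ (g := fun y => u y t₀) hcA A.contDiff.contDiffAt
    have hcx := hsol.contDiffAt_u hi ht₀
    have hch : ContDiffAt ℝ 2 h x₀ :=
      (Real.contDiff_exp.comp (contDiff_const.mul (contDiff_norm_sq ℝ))).contDiffAt
    have hmin : IsLocalMin (fun y => u (A y) t₀ - u y t₀ + δ * h y) x₀ := by
      filter_upwards [closedBall_mem_nhds_of_mem
        (show x₀ ∈ ball (0 : EuclideanSpace ℝ (Fin n)) R by simpa using hi)] with y hy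
      have := hW y hy t₀ ht0
      simp only [rotGap] at this hW0
      linarith
    have hlap := lap_nonneg_of_localMin (f := fun y => u (A y) t₀ - u y t₀ + δ * h y)
      ((hcA'.continuousAt.sub hcx.continuousAt).add (continuousAt_const.mul hch.continuousAt)) hmin
    rw [lap_sub_add_mul δ hcA' hcx hch, lap_comp_isometry A hcA, ← lap_eq_laplacian hcA,
      lap_gaussian] at hlap
    have hp1 := hsol.pde_u (A x₀) (by simpa using hiA) t₀ ht₀
    have hp2 := hsol.pde_u x₀ (by simpa using hi) t₀ ht₀
    have hd1 := (hsol.reg_time_u (A x₀) (by simpa using hiA.le) t₀ ht₀).hasDerivAt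
    have hd2 := (hsol.reg_time_u x₀ hx₀ t₀ ht₀).hasDerivAt
    have hd3 : HasDerivAt (fun t : ℝ => ε * Real.exp (K * t) * Real.exp (α * ‖x₀‖ ^ 2))
        (K * (δ * h x₀)) t₀ := by
      have h1 : HasDerivAt (fun t : ℝ => K * t) K t₀ := by
        simpa using (hasDerivAt_id t₀).const_mul K
      refine ((h1.exp.const_mul ε).mul_const (Real.exp (α * ‖x₀‖ ^ 2))).congr_deriv ?_
      simp only [hh, hδ]
      ring
    have hd := (hd1.sub hd2).add hd3
    have hle := deriv_nonpos_of_left_min hd (by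
      filter_upwards [Ioo_mem_nhdsLT ht₀.1] with s hs
      have hWs := hW x₀ hx₀ s ⟨hs.1.le, hs.2.le⟩
      simp only [rotGap] at hWs hW0
      simp only [Pi.add_apply, Pi.sub_apply]
      linarith)
    rw [hp1, hp2] at hle
    have hsq : ‖x₀‖ ^ 2 ≤ R ^ 2 := by gcongr
    have h1 : (2 * α * n + 4 * α ^ 2 * ‖x₀‖ ^ 2) * (δ * h x₀) ≤
        (2 * α * n + 4 * α ^ 2 * R ^ 2) * (δ * h x₀) := by gcongr
    have h2 := mul_lt_mul_of_pos_right hK hdh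
    have h3 := mul_le_mul_of_nonneg_left hexp hlam1.le
    have h4 : δ * ((2 * α * n + 4 * α ^ 2 * ‖x₀‖ ^ 2) * Real.exp (α * ‖x₀‖ ^ 2)) =
      (2 * α * n + 4 * α ^ 2 * ‖x₀‖ ^ 2) * (δ * h x₀) := by ring
    linarith

lemma rotGap_continuousOn {τ : ℝ} (hτ : τ < T)
    (hu : ContinuousOn (fun p : EuclideanSpace ℝ (Fin n) × ℝ => u p.1 p.2)
      ((closedBall (0 : EuclideanSpace ℝ (Fin n)) R) ×ˢ Ico (0 : ℝ) T))
    (A : EuclideanSpace ℝ (Fin n) ≃ₗᵢ[ℝ] EuclideanSpace ℝ (Fin n)) (ε K α : ℝ) :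
    ContinuousOn (fun p : EuclideanSpace ℝ (Fin n) × ℝ => rotGap A ε K α u p.1 p.2)
      ((closedBall (0 : EuclideanSpace ℝ (Fin n)) R) ×ˢ Icc (0 : ℝ) τ) := by
  have h1 : ContinuousOn (fun p : EuclideanSpace ℝ (Fin n) × ℝ => u (A p.1) p.2)
      ((closedBall (0 : EuclideanSpace ℝ (Fin n)) R) ×ˢ Icc (0 : ℝ) τ) := by
    refine hu.comp (f := fun p : EuclideanSpace ℝ (Fin n) × ℝ => (A p.1, p.2)) ?_ ?_
    · exact Continuous.continuousOn (by fun_prop)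
    · rintro ⟨x, t⟩ ⟨hx, ht⟩
      exact ⟨by simpa using hx, ht.1, ht.2.trans_lt hτ⟩
  have h2 := hu.mono (prod_mono subset_rfl (Icc_subset_Ico_right hτ) :
    (closedBall (0 : EuclideanSpace ℝ (Fin n)) R) ×ˢ Icc (0 : ℝ) τ ⊆ _)
  refine (h1.sub h2).add (Continuous.continuousOn ?_)
  fun_prop

/-- Letting `ε → 0` in an inequality with error term proportional to `ε`. -/
lemma le_of_forall_eps {a b c : ℝ} (h : ∀ ε > 0, 0 < a - b + ε * c) : b ≤ a := by
  by_contra! hab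
  have hc : 0 < |c| + 1 := by positivity
  have h1 := h ((b - a) / (|c| + 1)) (div_pos (by linarith) hc)
  have h2 : (b - a) / (|c| + 1) * c ≤ (b - a) / (|c| + 1) * (|c| + 1) := by
    have := le_abs_self c
    have : 0 ≤ (b - a) / (|c| + 1) := (div_pos (by linarith) hc).le
    gcongr
    linarith
  rw [div_mul_cancel₀ _ hc.ne'] at h2
  linarith

lemma le_rotated (hR : 0 < R) (hlam1 : 0 < lam1) (hlam2 : 0 < lam2)
    (hdata : AdmissibleData n R u₀ v₀) (hsol : IsClassicalSolution n R T lam1 lam2 u v u₀ v₀)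
    (A : EuclideanSpace ℝ (Fin n) ≃ₗᵢ[ℝ] EuclideanSpace ℝ (Fin n))
    {x : EuclideanSpace ℝ (Fin n)} (hx : x ∈ closedBall (0 : EuclideanSpace ℝ (Fin n)) R)
    {t : ℝ} (ht : t ∈ Ioo 0 T) :
    u x t ≤ u (A x) t ∧ v x t ≤ v (A x) t := by
  obtain ⟨L, hL, hLb⟩ := hsol.exists_exp_bound ht.2
  have hα : L / R * R = L := div_mul_cancel₀ _ hR.ne'
  set α := L / R
  have hα0 : 0 < α := by positivity
  set K := (lam1 + lam2) * L + (2 * α * n + 4 * α ^ 2 * R ^ 2) + 1 with hK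
  have hK1 : lam1 * L + (2 * α * n + 4 * α ^ 2 * R ^ 2) < K := by nlinarith
  have hK2 : lam2 * L + (2 * α * n + 4 * α ^ 2 * R ^ 2) < K := by nlinarith
  have main : ∀ ε > 0, 0 < rotGap A ε K α u x t ∧ 0 < rotGap A ε K α v x t := by
    intro ε hε
    refine pos_of_no_contact (isCompact_closedBall (0 : EuclideanSpace ℝ (Fin n)) R)
      (rotGap_continuousOn ht.2 hsol.cont_u A ε K α) (rotGap_continuousOn ht.2 hsol.cont_v A ε K α)
      ?_ ?_ ?_ ?_ x hx t ⟨ht.1.le, le_rfl⟩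
    · intro y hy
      have hAy : A y ∈ closedBall (0 : EuclideanSpace ℝ (Fin n)) R := by simpa using hy
      have := hdata.u0_radial_mono y hy (A y) hAy (by simp)
      simp only [rotGap, hsol.init_u y hy, hsol.init_u (A y) hAy]
      have : 0 < ε * Real.exp (K * 0) * Real.exp (α * ‖y‖ ^ 2) := by positivity
      linarith
    · intro y hy
      have hAy : A y ∈ closedBall (0 : EuclideanSpace ℝ (Fin n)) R := by simpa using hy
      have := hdata.v0_radial_mono y hy (A y) hAy (by simp)
      simp only [rotGap, hsol.init_v y hy, hsol.init_v (A y) hAy]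
      have : 0 < ε * Real.exp (K * 0) * Real.exp (α * ‖y‖ ^ 2) := by positivity
      linarith
    · intro t₀ ht₀ x₀ hx₀ h0 hW hZ
      exact rotGap_no_contact hR hlam1 hsol A hL hα hε hK1 ⟨ht₀.1, ht₀.2.trans_lt ht.2⟩ hx₀
        (hLb x₀ hx₀ t₀ ⟨ht₀.1.le, ht₀.2⟩).2 h0 hW (hZ x₀ hx₀ t₀ ⟨ht₀.1.le, le_rfl⟩)
    · intro t₀ ht₀ x₀ hx₀ h0 hW hZ
      exact rotGap_no_contact hR hlam2 hsol.swap A hL hα hε hK2 ⟨ht₀.1, ht₀.2.trans_lt ht.2⟩ hx₀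
        (hLb x₀ hx₀ t₀ ⟨ht₀.1.le, ht₀.2⟩).1 h0 hW (hZ x₀ hx₀ t₀ ⟨ht₀.1.le, le_rfl⟩)
  constructor
  · refine le_of_forall_eps (c := Real.exp (K * t) * Real.exp (α * ‖x‖ ^ 2)) fun ε hε => ?_
    have := (main ε hε).1
    rwa [rotGap, mul_assoc] at this
  · refine le_of_forall_eps (c := Real.exp (K * t) * Real.exp (α * ‖x‖ ^ 2)) fun ε hε => ?_
    have := (main ε hε).2
    rwa [rotGap, mul_assoc] at this

lemma solution_radial (hR : 0 < R) (hlam1 : 0 < lam1) (hlam2 : 0 < lam2)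
    (hdata : AdmissibleData n R u₀ v₀) (hsol : IsClassicalSolution n R T lam1 lam2 u v u₀ v₀)
    {x y : EuclideanSpace ℝ (Fin n)} (hx : x ∈ closedBall (0 : EuclideanSpace ℝ (Fin n)) R)
    (hxy : ‖x‖ = ‖y‖) {t : ℝ} (ht : t ∈ Ioo 0 T) :
    u x t = u y t ∧ v x t = v y t := by
  have hy : y ∈ closedBall (0 : EuclideanSpace ℝ (Fin n)) R := by
    rw [mem_closedBall_zero_iff] at hx ⊢; rwa [← hxy]
  have h1 := le_rotated hR hlam1 hlam2 hdata hsol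
    (Submodule.reflection (Submodule.span ℝ {x - y})ᗮ) hx ht
  have h2 := le_rotated hR hlam1 hlam2 hdata hsol
    (Submodule.reflection (Submodule.span ℝ {y - x})ᗮ) hy ht
  rw [Submodule.reflection_sub hxy] at h1
  rw [Submodule.reflection_sub hxy.symm] at h2
  exact ⟨le_antisymm h1.1 h2.1, le_antisymm h1.2 h2.2⟩

/-! ### Radial monotonicity by doubling the space variable -/

/-- Pairs of points of the closed ball whose second point is at least as far from the origin. -/
def orderedPairs (n : ℕ) (R : ℝ) : Set (EuclideanSpace ℝ (Fin n) × EuclideanSpace ℝ (Fin n)) :=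
  {p | ‖p.1‖ ≤ ‖p.2‖ ∧ ‖p.2‖ ≤ R}

/-- The difference `u(y,t) - u(x,t)` for `p = (x,y)`, raised by a small amount growing
exponentially in time. -/
noncomputable def pairGap (ε K : ℝ) (u : EuclideanSpace ℝ (Fin n) → ℝ → ℝ)
    (p : EuclideanSpace ℝ (Fin n) × EuclideanSpace ℝ (Fin n)) (t : ℝ) : ℝ :=
  u p.2 t - u p.1 t + ε * Real.exp (K * t)

lemma isCompact_orderedPairs : IsCompact (orderedPairs n R) := by
  refine ((isCompact_closedBall (0 : EuclideanSpace ℝ (Fin n)) R).prod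
    (isCompact_closedBall (0 : EuclideanSpace ℝ (Fin n)) R)).of_isClosed_subset ?_ ?_
  · exact (isClosed_le continuous_fst.norm continuous_snd.norm).inter
      (isClosed_le continuous_snd.norm continuous_const)
  · rintro ⟨x, y⟩ ⟨h1, h2⟩
    exact ⟨by simpa using h1.trans h2, by simpa using h2⟩

lemma pairGap_continuousOn {τ : ℝ} (hτ : τ < T)
    (hu : ContinuousOn (fun p : EuclideanSpace ℝ (Fin n) × ℝ => u p.1 p.2)
      ((closedBall (0 : EuclideanSpace ℝ (Fin n)) R) ×ˢ Ico (0 : ℝ) T)) (ε K : ℝ) :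
    ContinuousOn (fun q : (EuclideanSpace ℝ (Fin n) × EuclideanSpace ℝ (Fin n)) × ℝ =>
      pairGap ε K u q.1 q.2) (orderedPairs n R ×ˢ Icc (0 : ℝ) τ) := by
  have h1 : ContinuousOn (fun q : (EuclideanSpace ℝ (Fin n) × EuclideanSpace ℝ (Fin n)) × ℝ =>
      u q.1.2 q.2) (orderedPairs n R ×ˢ Icc (0 : ℝ) τ) := by
    refine hu.comp (f := fun q : (EuclideanSpace ℝ (Fin n) × EuclideanSpace ℝ (Fin n)) × ℝ =>
      (q.1.2, q.2)) (Continuous.continuousOn (by fun_prop)) ?_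
    rintro ⟨⟨x, y⟩, t⟩ ⟨hx, ht⟩
    exact ⟨by simpa using hx.2, ht.1, ht.2.trans_lt hτ⟩
  have h2 : ContinuousOn (fun q : (EuclideanSpace ℝ (Fin n) × EuclideanSpace ℝ (Fin n)) × ℝ =>
      u q.1.1 q.2) (orderedPairs n R ×ˢ Icc (0 : ℝ) τ) := by
    refine hu.comp (f := fun q : (EuclideanSpace ℝ (Fin n) × EuclideanSpace ℝ (Fin n)) × ℝ =>
      (q.1.1, q.2)) (Continuous.continuousOn (by fun_prop)) ?_
    rintro ⟨⟨x, y⟩, t⟩ ⟨hx, ht⟩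
    exact ⟨by simpa using hx.1.trans hx.2, ht.1, ht.2.trans_lt hτ⟩
  exact (h1.sub h2).add (Continuous.continuousOn (by fun_prop))

/-- `pairGap` of a radial `u` cannot vanish first: it is positive on the diagonal `|x| = |y|`,
has positive normal derivative in `y` on the sphere, and in the interior `y` is a local minimum
and `x` a local maximum of `u(·,t₀)`. -/
lemma pairGap_no_contact (hR : 0 < R) (hlam1 : 0 < lam1)
    (hsol : IsClassicalSolution n R T lam1 lam2 u v u₀ v₀)
    {L K ε : ℝ} (hε : 0 < ε) (hK : lam1 * L < K)
    {t₀ : ℝ} (ht₀ : t₀ ∈ Ioo 0 T)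
    {p₀ : EuclideanSpace ℝ (Fin n) × EuclideanSpace ℝ (Fin n)}
    (hp₀ : p₀ ∈ orderedPairs n R) (hLv : Real.exp (v p₀.1 t₀) ≤ L)
    (hrad : ‖p₀.1‖ = ‖p₀.2‖ → u p₀.1 t₀ = u p₀.2 t₀)
    (hW0 : pairGap ε K u p₀ t₀ = 0)
    (hW : ∀ p ∈ orderedPairs n R, ∀ s ∈ Icc 0 t₀, 0 ≤ pairGap ε K u p s)
    (hZ : 0 ≤ pairGap ε K v p₀ t₀) : False := by
  obtain ⟨x, y⟩ := p₀
  obtain ⟨hxy, hyR⟩ := hp₀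
  simp only at hxy hyR hrad hLv
  simp only [pairGap] at hW0 hZ
  have ht0 : t₀ ∈ Icc 0 t₀ := ⟨ht₀.1.le, le_rfl⟩
  have hδ0 : 0 < ε * Real.exp (K * t₀) := by positivity
  rcases hxy.eq_or_lt with hd | hlt
  · rw [hrad hd] at hW0
    linarith
  rcases hyR.eq_or_lt with hb | hi
  · have hd1 := hasDerivAt_of_normalDeriv (hsol.bc_u y hb t₀ ht₀)
    have hle := deriv_nonpos_of_left_min hd1 (by
      have hR' : Ioo (‖x‖ - R) 0 ∈ 𝓝[<] (0 : ℝ) := Ioo_mem_nhdsLT (by linarith)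
      filter_upwards [hR'] with s hs
      have hn := norm_add_normal hR hb (s := s) (by linarith [hs.1, norm_nonneg x])
      have hWs := hW (x, y + s • (R⁻¹ • y))
        ⟨by simp only [hn]; linarith [hs.1], by simp only [hn]; linarith [hs.2]⟩ t₀ ht0
      simp only [pairGap] at hWs
      simp only [zero_smul, add_zero]
      linarith)
    linarith [Real.exp_pos (v y t₀)]
  · have hcy := hsol.contDiffAt_u hi ht₀
    have hcx := hsol.contDiffAt_u (hlt.trans hi) ht₀
    have hly : 0 ≤ lap (fun z => u z t₀) y := by
      refine lap_nonneg_of_localMin hcy.continuousAt ?_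
      filter_upwards [continuous_norm.continuousAt.eventually (lt_mem_nhds hlt),
        continuous_norm.continuousAt.eventually (gt_mem_nhds hi)] with z hz1 hz2
      have := hW (x, z) ⟨hz1.le, hz2.le⟩ t₀ ht0
      simp only [pairGap] at this
      linarith
    have hlx : lap (fun z => u z t₀) x ≤ 0 := by
      refine lap_nonpos_of_localMax hcx ?_
      filter_upwards [continuous_norm.continuousAt.eventually (gt_mem_nhds hlt)] with z hz
      have := hW (z, y) ⟨hz.le, hyR⟩ t₀ ht0
      simp only [pairGap] at this
      linarith
    have hp1 := hsol.pde_u y (by simpa using hi) t₀ ht₀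
    have hp2 := hsol.pde_u x (by simpa using hlt.trans hi) t₀ ht₀
    have hd1 := (hsol.reg_time_u y (by simpa using hyR) t₀ ht₀).hasDerivAt
    have hd2 := (hsol.reg_time_u x (by simpa using hxy.trans hyR) t₀ ht₀).hasDerivAt
    have hd3 : HasDerivAt (fun t : ℝ => ε * Real.exp (K * t)) (K * (ε * Real.exp (K * t₀))) t₀ := by
      have h1 : HasDerivAt (fun t : ℝ => K * t) K t₀ := by
        simpa using (hasDerivAt_id t₀).const_mul K
      refine (h1.exp.const_mul ε).congr_deriv ?_
      ring
    have hle := deriv_nonpos_of_left_min ((hd1.sub hd2).add hd3) (by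
      filter_upwards [Ioo_mem_nhdsLT ht₀.1] with s hs
      have hWs := hW (x, y) ⟨hxy, hyR⟩ s ⟨hs.1.le, hs.2.le⟩
      simp only [pairGap] at hWs
      simp only [Pi.add_apply, Pi.sub_apply]
      linarith)
    rw [hp1, hp2] at hle
    have hexp := exp_sub_exp_ge (a := v y t₀) hLv hδ0.le (by linarith)
    have h2 := mul_lt_mul_of_pos_right hK hδ0
    have h3 := mul_le_mul_of_nonneg_left hexp hlam1.le
    linarith

lemma solution_mono (hR : 0 < R) (hlam1 : 0 < lam1) (hlam2 : 0 < lam2)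
    (hdata : AdmissibleData n R u₀ v₀) (hsol : IsClassicalSolution n R T lam1 lam2 u v u₀ v₀)
    {x y : EuclideanSpace ℝ (Fin n)} (hxy : ‖x‖ ≤ ‖y‖) (hy : ‖y‖ ≤ R)
    {t : ℝ} (ht : t ∈ Ioo 0 T) :
    u x t ≤ u y t ∧ v x t ≤ v y t := by
  obtain ⟨L, hL, hLb⟩ := hsol.exists_exp_bound ht.2
  set K := (lam1 + lam2) * L + 1 with hK
  have hK1 : lam1 * L < K := by nlinarith
  have hK2 : lam2 * L < K := by nlinarith
  have hin : ∀ p ∈ orderedPairs n R, p.1 ∈ closedBall (0 : EuclideanSpace ℝ (Fin n)) R ∧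
      p.2 ∈ closedBall (0 : EuclideanSpace ℝ (Fin n)) R := fun p hp =>
    ⟨by simpa using hp.1.trans hp.2, by simpa using hp.2⟩
  have main : ∀ ε > 0, 0 < pairGap ε K u (x, y) t ∧ 0 < pairGap ε K v (x, y) t := by
    intro ε hε
    have hε0 : 0 < ε * Real.exp (K * 0) := by positivity
    refine pos_of_no_contact isCompact_orderedPairs
      (pairGap_continuousOn ht.2 hsol.cont_u ε K) (pairGap_continuousOn ht.2 hsol.cont_v ε K)
      ?_ ?_ ?_ ?_ (x, y) ⟨hxy, hy⟩ t ⟨ht.1.le, le_rfl⟩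
    · intro p hp
      have := hdata.u0_radial_mono p.1 (hin p hp).1 p.2 (hin p hp).2 hp.1
      simp only [pairGap, hsol.init_u _ (hin p hp).1, hsol.init_u _ (hin p hp).2]
      linarith
    · intro p hp
      have := hdata.v0_radial_mono p.1 (hin p hp).1 p.2 (hin p hp).2 hp.1
      simp only [pairGap, hsol.init_v _ (hin p hp).1, hsol.init_v _ (hin p hp).2]
      linarith
    · intro t₀ ht₀ p hp h0 hW hZ
      have ht₀' : t₀ ∈ Ioo 0 T := ⟨ht₀.1, ht₀.2.trans_lt ht.2⟩
      exact pairGap_no_contact hR hlam1 hsol hε hK1 ht₀' hp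
        (hLb _ (hin p hp).1 t₀ ⟨ht₀.1.le, ht₀.2⟩).2
        (fun h => (solution_radial hR hlam1 hlam2 hdata hsol (hin p hp).1 h ht₀').1)
        h0 hW (hZ p hp t₀ ⟨ht₀.1.le, le_rfl⟩)
    · intro t₀ ht₀ p hp h0 hW hZ
      have ht₀' : t₀ ∈ Ioo 0 T := ⟨ht₀.1, ht₀.2.trans_lt ht.2⟩
      exact pairGap_no_contact hR hlam2 hsol.swap hε hK2 ht₀' hp
        (hLb _ (hin p hp).1 t₀ ⟨ht₀.1.le, ht₀.2⟩).1
        (fun h => (solution_radial hR hlam1 hlam2 hdata hsol (hin p hp).1 h ht₀').2)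
        h0 hW (hZ p hp t₀ ⟨ht₀.1.le, le_rfl⟩)
  exact ⟨le_of_forall_eps (c := Real.exp (K * t)) fun ε hε => (main ε hε).1,
    le_of_forall_eps (c := Real.exp (K * t)) fun ε hε => (main ε hε).2⟩

end

/-- Lemma 2.1(ii): for a classical solution `(u,v)` of problem (1.1), written in radial
coordinates, the radial derivatives satisfy `u_r(r,t) ≥ 0` and `v_r(r,t) ≥ 0` for all
`(r,t) ∈ [0,R] × (0,T)`.  The radial derivative at radius `r` in the unit direction `e`
is expressed as the (one-sided, within `[0,R]`) derivative of `ρ ↦ u(ρ • e, t)`. -/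
theorem radial_derivative_nonneg {n : ℕ} (hn : 1 ≤ n) {R T lam1 lam2 : ℝ}
    (hR : 0 < R) (hT : 0 < T) (hlam1 : 0 < lam1) (hlam2 : 0 < lam2)
    {u v : EuclideanSpace ℝ (Fin n) → ℝ → ℝ} {u₀ v₀ : EuclideanSpace ℝ (Fin n) → ℝ}
    (hdata : AdmissibleData n R u₀ v₀)
    (hsol : IsClassicalSolution n R T lam1 lam2 u v u₀ v₀) :
    ∀ e : EuclideanSpace ℝ (Fin n), ‖e‖ = 1 → ∀ r ∈ Icc (0 : ℝ) R, ∀ t ∈ Ioo (0 : ℝ) T,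
      0 ≤ derivWithin (fun ρ : ℝ => u (ρ • e) t) (Icc 0 R) r ∧
      0 ≤ derivWithin (fun ρ : ℝ => v (ρ • e) t) (Icc 0 R) r := by
  intro e he r hr t ht
  have hnorm : ∀ ρ ∈ Icc (0 : ℝ) R, ‖ρ • e‖ = ρ := fun ρ hρ => by
    rw [norm_smul, he, mul_one, Real.norm_of_nonneg hρ.1]
  have hmono : ∀ a ∈ Icc (0 : ℝ) R, ∀ b ∈ Icc (0 : ℝ) R, a ≤ b →
      u (a • e) t ≤ u (b • e) t ∧ v (a • e) t ≤ v (b • e) t := fun a ha b hb hab =>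
    solution_mono hR hlam1 hlam2 hdata hsol (by rwa [hnorm a ha, hnorm b hb])
      (by rw [hnorm b hb]; exact hb.2) ht
  exact ⟨MonotoneOn.derivWithin_nonneg fun a ha b hb hab => (hmono a ha b hb hab).1,
    MonotoneOn.derivWithin_nonneg fun a ha b hb hab => (hmono a ha b hb hab).2⟩
end

section
/- Theorem 4.1 (interior bound): Let (u,v) be a classical solution of problem (1.1) that blows up at time T < ∞. There exists λ₀ > 0, depending only on n, R, T, ‖u₀‖_∞, ‖v₀‖_∞ and the constant C from the upper blow-up rate estimate e^{u(R,t)}, e^{v(R,t)} ≤ C/(T−t), such that if max{λ₁, λ₂} ≤ λ₀, then there exists a constant A > 0 with u(x,t) ≤ log(1/(A(R²−|x|²)²)) and v(x,t) ≤ log(1/(A(R²−|x|²)²)) for all (x,t) ∈ B_R × (0,T). -/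
/-!
The bound follows from comparison with the explicit barrier
`w(x,t) = -log (A (R² - |x|²)² + B (T - t))`.

Write `g` for the argument of the logarithm and `ψ = (R² - |x|²)²`. Since `|∇ψ|² = 16 |x|² ψ` and
`Δψ = 8 |x|² - 4 n (R² - |x|²)`, one has
`g (w_t - Δw) = B + A Δψ - A² |∇ψ|² / g ≥ B - A (4n + 16) R²`, while `g e^w = 1`. Hence `w` is a
strict supersolution of both equations as soon as `max {λ₁, λ₂} + A (4n + 16) R² < B`. If moreover
`B < 1/C`, the rate estimate gives `u, v < w` on the lateral boundary, and if
`A R⁴ + B T < exp (-max {Ku, Kv})`, then `u, v < w` at time `0`. These conditions are met by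
choosing `B`, then `A`, then `λ₀` small in terms of the admissible quantities.

At a first time where `u` or `v` touches `w`, the touching point is interior and the first and second
derivative tests contradict strictness (`no_touching`); the coupling does no harm because `e^v`
is increasing in `v`. So `u, v < w` on `B_R × (0,T)`, and dropping `B (T - t)` from `g` gives the claim.
-/

open Set Real Metric MeasureTheory Filter Topology

/-- Second derivative test: the second derivative is nonpositive at a local maximum. -/
lemma iteratedDeriv_two_nonpos_of_isLocalMax {f : ℝ → ℝ} {a : ℝ} (hf : ContinuousAt f a)
    (h : IsLocalMax f a) : iteratedDeriv 2 f a ≤ 0 := by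
  by_contra! hpos
  have h2 : iteratedDeriv 2 f = deriv (deriv f) := by
    rw [iteratedDeriv_succ, iteratedDeriv_one]
  rw [h2] at hpos
  have hmin := isLocalMin_of_deriv_deriv_pos hpos h.deriv_eq_zero hf
  -- A point that is both a local minimum and a local maximum has a neighbourhood of constancy.
  have hc : f =ᶠ[𝓝 a] fun _ => f a := by
    filter_upwards [h, hmin] with s h1 h2 using le_antisymm h1 h2
  have : deriv (deriv f) a = 0 := by
    rw [hc.deriv.deriv_eq]
    simp
  linarith

/-- A function that is negative to the left of `t` and nonnegative at `t` has nonnegative derivative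
there. -/
lemma deriv_nonneg_of_neg_left {f : ℝ → ℝ} {t d : ℝ} (hf : HasDerivAt f d t)
    (hneg : ∀ᶠ s in 𝓝[<] t, f s < 0) (h0 : 0 ≤ f t) : 0 ≤ d := by
  have h1 : Tendsto (slope f t) (𝓝[<] t) (𝓝 d) :=
    (hasDerivAt_iff_tendsto_slope.1 hf).mono_left
      (nhdsWithin_mono _ (fun s hs => ne_of_lt hs))
  refine ge_of_tendsto h1 ?_
  filter_upwards [hneg, self_mem_nhdsWithin] with s hs hst
  rw [slope_def_field]
  have hst' : s < t := hst
  exact div_nonneg_of_nonpos (by linarith) (by linarith)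

/-- The second derivative of `s ↦ -log (A (a - 2 b s - s²)² + c)` at `0`; this function is the barrier
along a coordinate line, with `a = R² - |x|²` and `b = x i`. -/
lemma iteratedDeriv_two_barrier_line {A a b c : ℝ} (hA : 0 ≤ A) (hc : 0 < c) :
    iteratedDeriv 2 (fun s : ℝ => -Real.log (A * (a - 2 * b * s - s ^ 2) ^ 2 + c)) 0
      = -(8 * A * b ^ 2 - 4 * A * a) / (A * a ^ 2 + c)
        + 16 * A ^ 2 * a ^ 2 * b ^ 2 / (A * a ^ 2 + c) ^ 2 := by
  have hg : ∀ s : ℝ, 0 < A * (a - 2 * b * s - s ^ 2) ^ 2 + c := fun s => by positivity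
  have hp : ∀ s : ℝ, HasDerivAt (fun s : ℝ => a - 2 * b * s - s ^ 2) (-(2 * b) - 2 * s) s := by
    intro s
    have h1 := ((hasDerivAt_id s).const_mul (2 * b)).const_sub a
    have h2 := h1.sub ((hasDerivAt_id s).pow 2)
    refine HasDerivAt.congr_deriv h2 ?_
    simp
  have hG : ∀ s : ℝ, HasDerivAt (fun s : ℝ => A * (a - 2 * b * s - s ^ 2) ^ 2 + c)
      (A * (2 * (a - 2 * b * s - s ^ 2) * (-(2 * b) - 2 * s))) s := by
    intro s
    have h1 := (((hp s).pow 2).const_mul A).add_const c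
    refine HasDerivAt.congr_deriv h1 ?_
    simp
  have hd : deriv (fun s : ℝ => -Real.log (A * (a - 2 * b * s - s ^ 2) ^ 2 + c)) =
      fun s => -((A * (2 * (a - 2 * b * s - s ^ 2) * (-(2 * b) - 2 * s)))
        / (A * (a - 2 * b * s - s ^ 2) ^ 2 + c)) := by
    funext s
    exact (((hG s).log (hg s).ne').neg).deriv
  rw [iteratedDeriv_succ, iteratedDeriv_one, hd]
  have hlin : HasDerivAt (fun s : ℝ => -(2 * b) - 2 * s) (-2) 0 := by
    have := ((hasDerivAt_id (0 : ℝ)).const_mul 2).const_sub (-(2 * b))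
    refine HasDerivAt.congr_deriv this ?_
    simp
  have hN : HasDerivAt
      (fun s : ℝ => A * (2 * (a - 2 * b * s - s ^ 2) * (-(2 * b) - 2 * s)))
      (8 * A * b ^ 2 - 4 * A * a) 0 := by
    have h1 := (((hp 0).const_mul 2).mul hlin).const_mul A
    refine HasDerivAt.congr_deriv h1 ?_
    ring
  have h := ((hN.div (hG 0) (hg 0).ne').neg).deriv
  refine h.trans ?_
  have h0 := (hg 0).ne'
  have h0' : A * a ^ 2 + c ≠ 0 := by positivity
  simp only [mul_zero, sub_zero, ne_eq, OfNat.ofNat_ne_zero, not_false_eq_true, zero_pow]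
  field_simp
  ring

/-- The barrier, a common supersolution for `u` and `v`. -/
noncomputable def barrier {n : ℕ} (R T A B : ℝ) (x : EuclideanSpace ℝ (Fin n)) (t : ℝ) : ℝ :=
  -Real.log (A * (R ^ 2 - ‖x‖ ^ 2) ^ 2 + B * (T - t))

lemma norm_sq_add_single {n : ℕ} (x : EuclideanSpace ℝ (Fin n)) (i : Fin n) (s : ℝ) :
    ‖x + s • EuclideanSpace.single i (1 : ℝ)‖ ^ 2 = ‖x‖ ^ 2 + 2 * x i * s + s ^ 2 := by
  rw [norm_add_sq_real, inner_smul_right, EuclideanSpace.inner_single_right, norm_smul]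
  simp
  ring

lemma iteratedDeriv_two_barrier {n : ℕ} {R T A B : ℝ} (hA : 0 ≤ A) (hB : 0 < B)
    (x : EuclideanSpace ℝ (Fin n)) {t : ℝ} (ht : t < T) (i : Fin n) :
    iteratedDeriv 2 (fun s : ℝ => barrier R T A B (x + s • EuclideanSpace.single i (1 : ℝ)) t) 0
      = -(8 * A * (x i) ^ 2 - 4 * A * (R ^ 2 - ‖x‖ ^ 2))
            / (A * (R ^ 2 - ‖x‖ ^ 2) ^ 2 + B * (T - t))
        + 16 * A ^ 2 * (R ^ 2 - ‖x‖ ^ 2) ^ 2 * (x i) ^ 2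
            / (A * (R ^ 2 - ‖x‖ ^ 2) ^ 2 + B * (T - t)) ^ 2 := by
  rw [← iteratedDeriv_two_barrier_line hA (mul_pos hB (sub_pos.2 ht))]
  congr 1
  funext s
  rw [barrier, norm_sq_add_single]
  ring_nf

lemma lap_barrier {n : ℕ} {R T A B : ℝ} (hA : 0 ≤ A) (hB : 0 < B)
    (x : EuclideanSpace ℝ (Fin n)) {t : ℝ} (ht : t < T) :
    lap (fun y => barrier R T A B y t) x
      = -(8 * A * ‖x‖ ^ 2 - n * (4 * A * (R ^ 2 - ‖x‖ ^ 2)))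
            / (A * (R ^ 2 - ‖x‖ ^ 2) ^ 2 + B * (T - t))
        + 16 * A ^ 2 * (R ^ 2 - ‖x‖ ^ 2) ^ 2 * ‖x‖ ^ 2
            / (A * (R ^ 2 - ‖x‖ ^ 2) ^ 2 + B * (T - t)) ^ 2 := by
  have hx : ‖x‖ ^ 2 = ∑ i, (x i) ^ 2 := EuclideanSpace.real_norm_sq_eq x
  unfold lap
  rw [Finset.sum_congr rfl (fun i _ => iteratedDeriv_two_barrier hA hB x ht i),
    Finset.sum_add_distrib, ← Finset.sum_div, ← Finset.sum_div, ← Finset.mul_sum,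
    Finset.sum_neg_distrib, Finset.sum_sub_distrib, ← Finset.mul_sum, ← hx]
  simp

/-- The barrier is a strict supersolution of `w_t = Δw + lam e^w` (note `w_t = B / g` and
`e^w = 1 / g`). -/
lemma barrier_strict {n : ℕ} {R T A B lam : ℝ} (hA : 0 ≤ A) (hB : 0 < B)
    (hAB : lam + A * ((4 * n + 16) * R ^ 2) < B)
    {x : EuclideanSpace ℝ (Fin n)} (hx : ‖x‖ ≤ R) {t : ℝ} (ht : t < T) :
    lap (fun y => barrier R T A B y t) x + lam * Real.exp (barrier R T A B x t)
      < B / (A * (R ^ 2 - ‖x‖ ^ 2) ^ 2 + B * (T - t)) := by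
  rw [lap_barrier hA hB x ht, barrier]
  have hc : 0 < B * (T - t) := mul_pos hB (sub_pos.2 ht)
  have hr : ‖x‖ ^ 2 ≤ R ^ 2 := pow_le_pow_left₀ (norm_nonneg _) hx 2
  have hr0 : 0 ≤ ‖x‖ ^ 2 := by positivity
  generalize ‖x‖ ^ 2 = r at *
  set c := B * (T - t)
  have hg : 0 < A * (R ^ 2 - r) ^ 2 + c := by positivity
  set g := A * (R ^ 2 - r) ^ 2 + c with hgdef
  rw [Real.exp_neg, Real.exp_log hg]
  -- The gradient term is controlled by `A (R² - r)² ≤ g`.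
  have h1 : 16 * A ^ 2 * (R ^ 2 - r) ^ 2 * r / g ^ 2 ≤ 16 * A * r / g := by
    rw [div_le_div_iff₀ (by positivity) hg]
    have : 0 ≤ 16 * A * r * g * c := by positivity
    nlinarith
  have h2 : -(8 * A * r - n * (4 * A * (R ^ 2 - r))) / g + 16 * A * r / g + lam * g⁻¹ < B / g := by
    rw [← div_eq_mul_inv, ← add_div, ← add_div]
    apply div_lt_div_of_pos_right _ hg
    have h3 : 0 ≤ A * r := by positivity
    have h4 : A * r ≤ A * R ^ 2 := mul_le_mul_of_nonneg_left hr hA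
    have h5 : 0 ≤ (n : ℝ) * (A * r) := by positivity
    nlinarith
  linarith

lemma contDiff_barrier_line {n : ℕ} {R T A B : ℝ} (hA : 0 ≤ A) (hB : 0 < B)
    (x : EuclideanSpace ℝ (Fin n)) {t : ℝ} (ht : t < T) (i : Fin n) :
    ContDiff ℝ 2 (fun s : ℝ => barrier R T A B (x + s • EuclideanSpace.single i (1 : ℝ)) t) := by
  unfold barrier
  have hc : 0 < B * (T - t) := mul_pos hB (sub_pos.2 ht)
  simp only [norm_sq_add_single]
  refine (ContDiff.log (by fun_prop) ?_).neg
  intro s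
  positivity

/-- No first touching: in the interior, `u` cannot reach the barrier at a time before which both
`u` and `v` stayed strictly below it. -/
lemma no_touching {n : ℕ} {R T A B lam : ℝ} (hA : 0 ≤ A) (hB : 0 < B) (hlam : 0 < lam)
    (hAB : lam + A * ((4 * n + 16) * R ^ 2) < B)
    {u v : EuclideanSpace ℝ (Fin n) → ℝ → ℝ} {x : EuclideanSpace ℝ (Fin n)} {t : ℝ}
    (hx : x ∈ ball (0 : EuclideanSpace ℝ (Fin n)) R) (ht : t ∈ Ioo (0 : ℝ) T)
    (hreg : ContDiffOn ℝ 2 (fun y => u y t) (closedBall (0 : EuclideanSpace ℝ (Fin n)) R))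
    (hu : ∀ y ∈ closedBall (0 : EuclideanSpace ℝ (Fin n)) R, DifferentiableAt ℝ (u y) t)
    (hv : ∀ y ∈ closedBall (0 : EuclideanSpace ℝ (Fin n)) R, DifferentiableAt ℝ (v y) t)
    (hpde : deriv (u x) t = lap (fun y => u y t) x + lam * Real.exp (v x t))
    (hltu : ∀ y ∈ closedBall (0 : EuclideanSpace ℝ (Fin n)) R, ∀ s ∈ Ico 0 t,
      u y s < barrier R T A B y s)
    (hltv : ∀ y ∈ closedBall (0 : EuclideanSpace ℝ (Fin n)) R, ∀ s ∈ Ico 0 t,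
      v y s < barrier R T A B y s)
    (htouch : barrier R T A B x t ≤ u x t) : False := by
  obtain ⟨ht0, htT⟩ := ht
  have hxc := ball_subset_closedBall hx
  have hleft : Ico 0 t ∈ 𝓝[<] t := Ico_mem_nhdsLT ht0
  have hw : ∀ y : EuclideanSpace ℝ (Fin n), HasDerivAt (barrier R T A B y)
      (B / (A * (R ^ 2 - ‖y‖ ^ 2) ^ 2 + B * (T - t))) t := by
    intro y
    have hc : 0 < B * (T - t) := mul_pos hB (sub_pos.2 htT)
    have h1 := ((((hasDerivAt_id t).const_sub T).const_mul B).const_add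
      (A * (R ^ 2 - ‖y‖ ^ 2) ^ 2)).log (by simp only [id]; positivity)
    refine HasDerivAt.congr_deriv h1.neg ?_
    simp [neg_div]
  have hle : ∀ f : EuclideanSpace ℝ (Fin n) → ℝ → ℝ,
      (∀ y ∈ closedBall (0 : EuclideanSpace ℝ (Fin n)) R, DifferentiableAt ℝ (f y) t) →
      (∀ y ∈ closedBall (0 : EuclideanSpace ℝ (Fin n)) R, ∀ s ∈ Ico 0 t,
        f y s < barrier R T A B y s) →
      ∀ y ∈ closedBall (0 : EuclideanSpace ℝ (Fin n)) R, f y t ≤ barrier R T A B y t := by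
    intro f hf hlt y hy
    refine le_of_tendsto_of_tendsto ((hf y hy).continuousAt.tendsto.mono_left nhdsWithin_le_nhds)
      ((hw y).continuousAt.tendsto.mono_left (nhdsWithin_le_nhds (s := Iio t))) ?_
    filter_upwards [hleft] with s hs using (hlt y hy s hs).le
  have hleu := hle u hu hltu
  have hlev := hle v hv hltv
  have htime : B / (A * (R ^ 2 - ‖x‖ ^ 2) ^ 2 + B * (T - t)) ≤ deriv (u x) t := by
    have := deriv_nonneg_of_neg_left (f := fun s => u x s - barrier R T A B x s)
      ((hu x hxc).hasDerivAt.sub (hw x))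
      (by filter_upwards [hleft] with s hs; linarith [hltu x hxc s hs]) (by linarith)
    linarith
  have hspace : lap (fun y => u y t) x ≤ lap (fun y => barrier R T A B y t) x := by
    unfold lap
    refine Finset.sum_le_sum fun i _ => ?_
    have hlinec : Continuous (fun s : ℝ => x + s • EuclideanSpace.single i (1 : ℝ)) := by fun_prop
    have hnear : ∀ᶠ s : ℝ in 𝓝 0, x + s • EuclideanSpace.single i (1 : ℝ) ∈
        ball (0 : EuclideanSpace ℝ (Fin n)) R := by
      apply hlinec.continuousAt.eventually_mem
      simpa using isOpen_ball.mem_nhds hx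
    have hcu : ContDiffAt ℝ 2
        (fun s : ℝ => u (x + s • EuclideanSpace.single i (1 : ℝ)) t) 0 := by
      have h1 : ContDiffAt ℝ 2 (fun y => u y t)
          ((fun s : ℝ => x + s • EuclideanSpace.single i (1 : ℝ)) 0) := by
        refine hreg.contDiffAt ?_
        simpa using closedBall_mem_nhds_of_mem hx
      have h2 : ContDiffAt ℝ 2 (fun s : ℝ => x + s • EuclideanSpace.single i (1 : ℝ)) 0 := by
        fun_prop
      exact ContDiffAt.comp (0 : ℝ) h1 h2
    have hcw := (contDiff_barrier_line (R := R) hA hB x htT i).contDiffAt (x := (0 : ℝ))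
    have hmax := iteratedDeriv_two_nonpos_of_isLocalMax
      (f := (fun s : ℝ => u (x + s • EuclideanSpace.single i (1 : ℝ)) t) -
        fun s : ℝ => barrier R T A B (x + s • EuclideanSpace.single i (1 : ℝ)) t) (a := 0)
      (hcu.sub hcw).continuousAt (by
        filter_upwards [hnear] with s hs
        have := hleu _ (ball_subset_closedBall hs)
        simp only [Pi.sub_apply, zero_smul, add_zero]
        linarith)
    rw [iteratedDeriv_sub hcu hcw] at hmax
    linarith
  have hstrict := barrier_strict hA hB hAB (mem_closedBall_zero_iff.1 hxc) htT
  have hexp : lam * Real.exp (v x t) ≤ lam * Real.exp (barrier R T A B x t) :=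
    mul_le_mul_of_nonneg_left (Real.exp_le_exp.2 (hlev x hxc)) hlam.le
  linarith

/-- Comparison principle: solutions that start below the barrier and stay below it on the lateral
boundary stay strictly below it. -/
lemma lt_barrier {n : ℕ} {R T A B lam1 lam2 : ℝ} (hA : 0 ≤ A) (hB : 0 < B)
    (hl1 : 0 < lam1) (hl2 : 0 < lam2)
    (hAB1 : lam1 + A * ((4 * n + 16) * R ^ 2) < B)
    (hAB2 : lam2 + A * ((4 * n + 16) * R ^ 2) < B)
    {u v : EuclideanSpace ℝ (Fin n) → ℝ → ℝ} {u₀ v₀ : EuclideanSpace ℝ (Fin n) → ℝ}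
    (hsol : IsClassicalSolution n R T lam1 lam2 u v u₀ v₀)
    (hinit : ∀ x ∈ closedBall (0 : EuclideanSpace ℝ (Fin n)) R,
      u₀ x < barrier R T A B x 0 ∧ v₀ x < barrier R T A B x 0)
    (hbd : ∀ t ∈ Ioo (0 : ℝ) T, ∀ x : EuclideanSpace ℝ (Fin n), ‖x‖ = R →
      u x t < barrier R T A B x t ∧ v x t < barrier R T A B x t)
    {x : EuclideanSpace ℝ (Fin n)} (hx : x ∈ closedBall (0 : EuclideanSpace ℝ (Fin n)) R)
    {t : ℝ} (ht : t ∈ Ioo (0 : ℝ) T) :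
    u x t < barrier R T A B x t ∧ v x t < barrier R T A B x t := by
  set K : Set (EuclideanSpace ℝ (Fin n) × ℝ) := closedBall 0 R ×ˢ Icc 0 t with hK
  have hKc : IsCompact K := (isCompact_closedBall _ _).prod isCompact_Icc
  have hsub : K ⊆ closedBall 0 R ×ˢ Ico 0 T :=
    prod_mono_right fun s hs => ⟨hs.1, hs.2.trans_lt ht.2⟩
  have hwc : ContinuousOn (fun p : EuclideanSpace ℝ (Fin n) × ℝ => barrier R T A B p.1 p.2) K := by
    unfold barrier
    refine (ContinuousOn.log (by fun_prop) ?_).neg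
    intro p hp
    have h1 : 0 < B * (T - p.2) := mul_pos hB (sub_pos.2 (hsub hp).2.2)
    positivity
  -- The set of times and places where one of the components has reached the barrier.
  set S : Set (EuclideanSpace ℝ (Fin n) × ℝ) :=
    {p ∈ K | barrier R T A B p.1 p.2 ≤ u p.1 p.2} ∪
      {p ∈ K | barrier R T A B p.1 p.2 ≤ v p.1 p.2} with hS
  have hSK : ∀ p ∈ S, p ∈ K := by
    rintro p (hp | hp) <;> exact hp.1
  have hSc : IsCompact S := by
    refine hKc.of_isClosed_subset ?_ hSK
    exact (hKc.isClosed.isClosed_le hwc (hsol.cont_u.mono hsub)).union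
      (hKc.isClosed.isClosed_le hwc (hsol.cont_v.mono hsub))
  by_contra hcon
  have hne : S.Nonempty := by
    have hxt : (x, t) ∈ K := ⟨hx, ht.1.le, le_rfl⟩
    rw [not_and_or, not_lt, not_lt] at hcon
    refine ⟨(x, t), ?_⟩
    rcases hcon with h | h
    · exact Or.inl ⟨hxt, h⟩
    · exact Or.inr ⟨hxt, h⟩
  obtain ⟨⟨y, s⟩, hyS, hmin⟩ := hSc.exists_isMinOn hne continuousOn_snd
  have hyK := hSK _ hyS
  have hy : y ∈ closedBall (0 : EuclideanSpace ℝ (Fin n)) R := hyK.1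
  have hsT : s < T := (hsub hyK).2.2
  have hnot : ¬ (u y s < barrier R T A B y s ∧ v y s < barrier R T A B y s) := by
    rw [not_and_or, not_lt, not_lt]
    exact hyS.imp (fun h => h.2) (fun h => h.2)
  have hs0 : 0 < s := by
    refine lt_of_le_of_ne hyK.2.1 ?_
    rintro rfl
    apply hnot
    rw [hsol.init_u y hy, hsol.init_v y hy]
    exact hinit y hy
  have hyball : y ∈ ball (0 : EuclideanSpace ℝ (Fin n)) R := by
    rw [mem_ball_zero_iff]
    refine lt_of_le_of_ne (mem_closedBall_zero_iff.1 hy) fun h => ?_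
    exact hnot (hbd s ⟨hs0, hsT⟩ y h)
  have hbefore : ∀ z ∈ closedBall (0 : EuclideanSpace ℝ (Fin n)) R, ∀ τ ∈ Ico 0 s,
      u z τ < barrier R T A B z τ ∧ v z τ < barrier R T A B z τ := by
    intro z hz τ hτ
    by_contra hc
    have hzK : (z, τ) ∈ K := ⟨hz, hτ.1, hτ.2.le.trans hyK.2.2⟩
    rw [not_and_or, not_lt, not_lt] at hc
    have hzS : (z, τ) ∈ S := by
      rcases hc with h | h
      · exact Or.inl ⟨hzK, h⟩
      · exact Or.inr ⟨hzK, h⟩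
    have : s ≤ τ := hmin hzS
    exact absurd hτ.2 (not_lt.2 this)
  have hst : s ∈ Ioo 0 T := ⟨hs0, hsT⟩
  rcases hyS with h | h
  · exact no_touching hA hB hl1 hAB1 hyball hst (hsol.reg_space_u s hst)
      (fun z hz => hsol.reg_time_u z hz s hst) (fun z hz => hsol.reg_time_v z hz s hst)
      (hsol.pde_u y hyball s hst) (fun z hz τ hτ => (hbefore z hz τ hτ).1)
      (fun z hz τ hτ => (hbefore z hz τ hτ).2) h.2
  · exact no_touching hA hB hl2 hAB2 hyball hst (hsol.reg_space_v s hst)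
      (fun z hz => hsol.reg_time_v z hz s hst) (fun z hz => hsol.reg_time_u z hz s hst)
      (hsol.pde_v y hyball s hst) (fun z hz τ hτ => (hbefore z hz τ hτ).2)
      (fun z hz τ hτ => (hbefore z hz τ hτ).1) h.2

/-- Theorem 4.1 (interior bound): there exists `λ₀ > 0`, depending only on `n, R, T`,
`‖u₀‖_∞`, `‖v₀‖_∞` (here bounded by `Ku`, `Kv`) and the constant `C` from the upper
blow-up rate estimate `e^{u(R,t)}, e^{v(R,t)} ≤ C/(T−t)`, such that for every blow-up
solution with `max{λ₁,λ₂} ≤ λ₀` there is `A > 0` with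
`u(x,t) ≤ log(1/(A(R²−|x|²)²))` and `v(x,t) ≤ log(1/(A(R²−|x|²)²))` on `B_R × (0,T)`. -/
theorem interior_bound {n : ℕ} (hn : 1 ≤ n) {R T C Ku Kv : ℝ}
    (hR : 0 < R) (hT : 0 < T) (hC : 0 < C) :
    ∃ lam0 : ℝ, 0 < lam0 ∧
      ∀ lam1 lam2 : ℝ, 0 < lam1 → 0 < lam2 →
      ∀ u v : EuclideanSpace ℝ (Fin n) → ℝ → ℝ, ∀ u₀ v₀ : EuclideanSpace ℝ (Fin n) → ℝ,
        AdmissibleData n R u₀ v₀ →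
        IsClassicalSolution n R T lam1 lam2 u v u₀ v₀ →
        BlowsUpAt n R T u v →
        (∀ x ∈ closedBall (0 : EuclideanSpace ℝ (Fin n)) R, |u₀ x| ≤ Ku) →
        (∀ x ∈ closedBall (0 : EuclideanSpace ℝ (Fin n)) R, |v₀ x| ≤ Kv) →
        (∀ t ∈ Ioo (0 : ℝ) T, ∀ x : EuclideanSpace ℝ (Fin n), ‖x‖ = R →
          Real.exp (u x t) ≤ C / (T - t) ∧ Real.exp (v x t) ≤ C / (T - t)) →
        max lam1 lam2 ≤ lam0 →
        ∃ A : ℝ, 0 < A ∧ ∀ x ∈ ball (0 : EuclideanSpace ℝ (Fin n)) R, ∀ t ∈ Ioo (0 : ℝ) T,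
          u x t ≤ Real.log (1 / (A * (R ^ 2 - ‖x‖ ^ 2) ^ 2)) ∧
          v x t ≤ Real.log (1 / (A * (R ^ 2 - ‖x‖ ^ 2) ^ 2)) := by
  set K := max Ku Kv with hKdef
  set E := Real.exp (-K) with hE
  have hEpos : 0 < E := Real.exp_pos _
  obtain ⟨B, hB, hBC, hBT⟩ : ∃ B : ℝ, 0 < B ∧ B * C < 1 ∧ B * T ≤ E / 4 := by
    refine ⟨min (1 / (2 * C)) (E / (4 * T)), by positivity, ?_, ?_⟩
    · calc _ ≤ 1 / (2 * C) * C := mul_le_mul_of_nonneg_right (min_le_left _ _) hC.le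
        _ = 1 / 2 := by field_simp
        _ < 1 := by norm_num
    · calc _ ≤ E / (4 * T) * T := mul_le_mul_of_nonneg_right (min_le_right _ _) hT.le
        _ = E / 4 := by field_simp
  obtain ⟨A, hA, hAE, hAB⟩ : ∃ A : ℝ, 0 < A ∧ A * R ^ 4 ≤ E / 4 ∧
      A * ((4 * n + 16) * R ^ 2) ≤ B / 4 := by
    refine ⟨min (E / (4 * R ^ 4)) (B / (4 * ((4 * n + 16) * R ^ 2))), by positivity, ?_, ?_⟩
    · calc _ ≤ E / (4 * R ^ 4) * R ^ 4 :=
          mul_le_mul_of_nonneg_right (min_le_left _ _) (by positivity)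
        _ = E / 4 := by field_simp
    · calc _ ≤ B / (4 * ((4 * n + 16) * R ^ 2)) * ((4 * n + 16) * R ^ 2) :=
          mul_le_mul_of_nonneg_right (min_le_right _ _) (by positivity)
        _ = B / 4 := by field_simp
  refine ⟨B / 2, by positivity, ?_⟩
  intro lam1 lam2 hl1 hl2 u v u₀ v₀ _ hsol _ hKu hKv hrate hmax
  have hm1 := (le_max_left lam1 lam2).trans hmax
  have hm2 := (le_max_right lam1 lam2).trans hmax
  have hinit : ∀ x ∈ closedBall (0 : EuclideanSpace ℝ (Fin n)) R, K < barrier R T A B x 0 := by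
    intro x hx
    have hr : ‖x‖ ^ 2 ≤ R ^ 2 :=
      pow_le_pow_left₀ (norm_nonneg _) (mem_closedBall_zero_iff.1 hx) 2
    have hr0 : 0 ≤ ‖x‖ ^ 2 := by positivity
    have h1 : (R ^ 2 - ‖x‖ ^ 2) ^ 2 ≤ R ^ 4 := by nlinarith
    have h2 := mul_le_mul_of_nonneg_left h1 hA.le
    have hpos : 0 < A * (R ^ 2 - ‖x‖ ^ 2) ^ 2 + B * (T - 0) := by
      rw [sub_zero]; positivity
    have h3 : A * (R ^ 2 - ‖x‖ ^ 2) ^ 2 + B * (T - 0) < E := by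
      rw [sub_zero]; linarith
    have h4 := (Real.log_lt_iff_lt_exp hpos).2 h3
    unfold barrier
    linarith
  have hbd : ∀ t ∈ Ioo (0 : ℝ) T, ∀ x : EuclideanSpace ℝ (Fin n), ‖x‖ = R → ∀ a : ℝ,
      Real.exp a ≤ C / (T - t) → a < barrier R T A B x t := by
    intro t ht x hx a ha
    have hTt : 0 < T - t := sub_pos.2 ht.2
    have hc : 0 < B * (T - t) := mul_pos hB hTt
    unfold barrier
    rw [hx, sub_self, zero_pow two_ne_zero, mul_zero, zero_add, ← Real.log_inv,
      Real.lt_log_iff_exp_lt (inv_pos.2 hc)]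
    refine ha.trans_lt ?_
    rw [inv_eq_one_div, div_lt_div_iff₀ hTt hc]
    nlinarith
  have hmain : ∀ x ∈ ball (0 : EuclideanSpace ℝ (Fin n)) R, ∀ t ∈ Ioo (0 : ℝ) T,
      barrier R T A B x t ≤ Real.log (1 / (A * (R ^ 2 - ‖x‖ ^ 2) ^ 2)) := by
    intro x hx t ht
    have hr : ‖x‖ ^ 2 < R ^ 2 :=
      pow_lt_pow_left₀ (mem_ball_zero_iff.1 hx) (norm_nonneg _) two_ne_zero
    have hpos : 0 < A * (R ^ 2 - ‖x‖ ^ 2) ^ 2 := mul_pos hA (pow_pos (sub_pos.2 hr) 2)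
    have hc : 0 < B * (T - t) := mul_pos hB (sub_pos.2 ht.2)
    rw [one_div, Real.log_inv, barrier]
    exact neg_le_neg (Real.log_le_log hpos (by linarith))
  refine ⟨A, hA, fun x hx t ht => ?_⟩
  have hcmp := lt_barrier hA.le hB hl1 hl2 (by linarith) (by linarith) hsol
    (fun y hy => ⟨((le_abs_self _).trans ((hKu y hy).trans (le_max_left _ _))).trans_lt
        (hinit y hy),
      ((le_abs_self _).trans ((hKv y hy).trans (le_max_right _ _))).trans_lt (hinit y hy)⟩)
    (fun s hs y hy => ⟨hbd s hs y hy _ (hrate s hs y hy).1, hbd s hs y hy _ (hrate s hs y hy).2⟩)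
    (ball_subset_closedBall hx) ht
  exact ⟨hcmp.1.le.trans (hmain x hx t ht), hcmp.2.le.trans (hmain x hx t ht)⟩
end

section
/- Parabolic identity for J = Me^u − e^v (proof of Lemma 2.2): Let (u,v) be a radial classical solution as in the context and let M > 0. Define J(r,t) = M e^{u(r,t)} − e^{v(r,t)}, b(r,t) = −[2e^v v_r/(M e^u) + J_r/(M e^u)], and c(r,t) = (e^v/(M e^u)) v_r². Then for all 0 < r < R and 0 < t < T: J_t − J_rr − ((n−1)/r) J_r − b J_r − c J = (λ₁ M − λ₂) e^{u+v}. In particular, if M ≥ λ₂/λ₁ then J_t − J_rr − ((n−1)/r) J_r − b J_r − c J ≥ 0. -/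
/-!
Write `A = M e^u`, `B = e^v`, so that `J = A - B` and `J_r = A u_r - B v_r`. The chain rule and the
two equations give
`J_t - J_rr - ((n-1)/r) J_r = (λ₁ M - λ₂) e^{u+v} - A u_r² + B v_r²`.
On the other hand `b J_r = -(A u_r - B v_r)(A u_r + B v_r) / A = -A u_r² + B² v_r² / A` and
`c J = B v_r² - B² v_r² / A`, so `b J_r + c J` cancels the gradient terms exactly.
The calculus input is the formula for the first and second spatial derivatives of `J`
(`hasDerivWithinAt_J` and `hasDerivWithinAt_J_r`).
-/

open Set Real Filter Topology

/-- One-sided spatial derivative on the interval `[0,R]` (agrees with the usual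
derivative at interior points). -/
noncomputable def dr (R : ℝ) (f : ℝ → ℝ) (r : ℝ) : ℝ :=
  derivWithin f (Set.Icc 0 R) r

/-- A radial classical solution of problem (1.1), written in radial coordinates:
`u, v : [0,R] × (0,T) → ℝ`, of class C² in `r` and C¹ in `t`, satisfying
`u_t = u_rr + ((n−1)/r) u_r + λ₁ e^v`, `v_t = v_rr + ((n−1)/r) v_r + λ₂ e^u` for
`0 < r < R`, `0 < t < T`, with boundary conditions `u_r(R,t) = e^{v(R,t)}`,
`v_r(R,t) = e^{u(R,t)}`. -/
structure IsRadialSolution (n : ℕ) (R T lam1 lam2 : ℝ) (u v : ℝ → ℝ → ℝ) : Prop where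
  reg_r_u : ∀ t ∈ Ioo (0 : ℝ) T, ContDiffOn ℝ 2 (fun r => u r t) (Icc (0 : ℝ) R)
  reg_r_v : ∀ t ∈ Ioo (0 : ℝ) T, ContDiffOn ℝ 2 (fun r => v r t) (Icc (0 : ℝ) R)
  reg_t_u : ∀ r ∈ Icc (0 : ℝ) R, ∀ t ∈ Ioo (0 : ℝ) T, DifferentiableAt ℝ (u r) t
  reg_t_v : ∀ r ∈ Icc (0 : ℝ) R, ∀ t ∈ Ioo (0 : ℝ) T, DifferentiableAt ℝ (v r) t
  pde_u : ∀ r ∈ Ioo (0 : ℝ) R, ∀ t ∈ Ioo (0 : ℝ) T,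
    deriv (u r) t = dr R (dr R (fun s => u s t)) r
      + ((n - 1 : ℝ) / r) * dr R (fun s => u s t) r + lam1 * Real.exp (v r t)
  pde_v : ∀ r ∈ Ioo (0 : ℝ) R, ∀ t ∈ Ioo (0 : ℝ) T,
    deriv (v r) t = dr R (dr R (fun s => v s t)) r
      + ((n - 1 : ℝ) / r) * dr R (fun s => v s t) r + lam2 * Real.exp (u r t)
  bc_u : ∀ t ∈ Ioo (0 : ℝ) T, dr R (fun s => u s t) R = Real.exp (v R t)
  bc_v : ∀ t ∈ Ioo (0 : ℝ) T, dr R (fun s => v s t) R = Real.exp (u R t)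

/-- The function `J(r,t) = M e^{u(r,t)} − e^{v(r,t)}` from the proof of Lemma 2.2. -/
noncomputable def Jfun (u v : ℝ → ℝ → ℝ) (M : ℝ) (r t : ℝ) : ℝ :=
  M * Real.exp (u r t) - Real.exp (v r t)

/-- The first-order coefficient `b = −[2 e^v v_r/(M e^u) + J_r/(M e^u)]`. -/
noncomputable def bfun (u v : ℝ → ℝ → ℝ) (M R : ℝ) (r t : ℝ) : ℝ :=
  -(2 * Real.exp (v r t) * dr R (fun s => v s t) r / (M * Real.exp (u r t))
      + dr R (fun s => Jfun u v M s t) r / (M * Real.exp (u r t)))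

/-- The zeroth-order coefficient `c = (e^v/(M e^u)) v_r²`. -/
noncomputable def cfun (u v : ℝ → ℝ → ℝ) (M R : ℝ) (r t : ℝ) : ℝ :=
  Real.exp (v r t) / (M * Real.exp (u r t)) * (dr R (fun s => v s t) r) ^ 2

lemma hasDerivWithinAt_dr {R : ℝ} {f : ℝ → ℝ} (hf : ContDiffOn ℝ 2 f (Icc 0 R))
    {r : ℝ} (hr : r ∈ Icc 0 R) : HasDerivWithinAt f (dr R f r) (Icc 0 R) r :=
  ((hf.differentiableOn (by norm_num)) r hr).hasDerivWithinAt

lemma hasDerivWithinAt_dr_dr {R : ℝ} (hR : 0 < R) {f : ℝ → ℝ} (hf : ContDiffOn ℝ 2 f (Icc 0 R))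
    {r : ℝ} (hr : r ∈ Icc 0 R) :
    HasDerivWithinAt (dr R f) (dr R (dr R f) r) (Icc 0 R) r := by
  have h : ContDiffOn ℝ 1 (derivWithin f (Icc 0 R)) (Icc 0 R) :=
    hf.derivWithin (uniqueDiffOn_Icc hR) (by norm_num)
  exact ((h.differentiableOn (by norm_num)) r hr).hasDerivWithinAt

lemma hasDerivWithinAt_J {R M t : ℝ} {u v : ℝ → ℝ → ℝ}
    (hu : ContDiffOn ℝ 2 (fun s => u s t) (Icc 0 R))
    (hv : ContDiffOn ℝ 2 (fun s => v s t) (Icc 0 R)) {r : ℝ} (hr : r ∈ Icc 0 R) :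
    HasDerivWithinAt (fun s => Jfun u v M s t)
      (M * (Real.exp (u r t) * dr R (fun s => u s t) r)
        - Real.exp (v r t) * dr R (fun s => v s t) r) (Icc 0 R) r :=
  ((hasDerivWithinAt_dr hu hr).exp.const_mul M).sub (hasDerivWithinAt_dr hv hr).exp

lemma dr_J {R M t : ℝ} (hR : 0 < R) {u v : ℝ → ℝ → ℝ}
    (hu : ContDiffOn ℝ 2 (fun s => u s t) (Icc 0 R))
    (hv : ContDiffOn ℝ 2 (fun s => v s t) (Icc 0 R)) {r : ℝ} (hr : r ∈ Icc 0 R) :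
    dr R (fun s => Jfun u v M s t) r =
      M * (Real.exp (u r t) * dr R (fun s => u s t) r)
        - Real.exp (v r t) * dr R (fun s => v s t) r :=
  (hasDerivWithinAt_J hu hv hr).derivWithin (uniqueDiffOn_Icc hR r hr)

/-- The formula for `J_r` holds on all of `[0,R]`, so it may be differentiated within `[0,R]`
to obtain `J_rr`. -/
lemma hasDerivWithinAt_J_r {R M t : ℝ} (hR : 0 < R) {u v : ℝ → ℝ → ℝ}
    (hu : ContDiffOn ℝ 2 (fun s => u s t) (Icc 0 R))
    (hv : ContDiffOn ℝ 2 (fun s => v s t) (Icc 0 R)) {r : ℝ} (hr : r ∈ Icc 0 R) :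
    HasDerivWithinAt (dr R (fun s => Jfun u v M s t))
      (M * (Real.exp (u r t) * dr R (fun s => u s t) r * dr R (fun s => u s t) r
          + Real.exp (u r t) * dr R (dr R (fun s => u s t)) r)
        - (Real.exp (v r t) * dr R (fun s => v s t) r * dr R (fun s => v s t) r
          + Real.exp (v r t) * dr R (dr R (fun s => v s t)) r)) (Icc 0 R) r := by
  have h := (((hasDerivWithinAt_dr hu hr).exp.mul (hasDerivWithinAt_dr_dr hR hu hr)).const_mul
    M).sub ((hasDerivWithinAt_dr hv hr).exp.mul (hasDerivWithinAt_dr_dr hR hv hr))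
  exact h.congr (fun s hs => dr_J hR hu hv hs) (dr_J hR hu hv hr)

/-- Parabolic identity for `J = M e^u − e^v` (proof of Lemma 2.2): for a radial classical
solution and any `M > 0`,
`J_t − J_rr − ((n−1)/r) J_r − b J_r − c J = (λ₁ M − λ₂) e^{u+v}` for `0 < r < R`,
`0 < t < T`; in particular, if `M ≥ λ₂/λ₁` the left-hand side is nonnegative. -/
theorem parabolic_identity_J {n : ℕ} (hn : 1 ≤ n) {R T lam1 lam2 : ℝ}
    (hR : 0 < R) (hT : 0 < T) (hlam1 : 0 < lam1) (hlam2 : 0 < lam2)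
    {u v : ℝ → ℝ → ℝ} (hsol : IsRadialSolution n R T lam1 lam2 u v)
    {M : ℝ} (hM : 0 < M) :
    ∀ r ∈ Ioo (0 : ℝ) R, ∀ t ∈ Ioo (0 : ℝ) T,
      (deriv (fun τ => Jfun u v M r τ) t
        - dr R (dr R (fun s => Jfun u v M s t)) r
        - ((n - 1 : ℝ) / r) * dr R (fun s => Jfun u v M s t) r
        - bfun u v M R r t * dr R (fun s => Jfun u v M s t) r
        - cfun u v M R r t * Jfun u v M r t
        = (lam1 * M - lam2) * Real.exp (u r t + v r t)) ∧
      (lam2 / lam1 ≤ M →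
        0 ≤ deriv (fun τ => Jfun u v M r τ) t
          - dr R (dr R (fun s => Jfun u v M s t)) r
          - ((n - 1 : ℝ) / r) * dr R (fun s => Jfun u v M s t) r
          - bfun u v M R r t * dr R (fun s => Jfun u v M s t) r
          - cfun u v M R r t * Jfun u v M r t) := by
  intro r hr t ht
  have hr' : r ∈ Icc (0 : ℝ) R := Ioo_subset_Icc_self hr
  have hu := hsol.reg_r_u t ht
  have hv := hsol.reg_r_v t ht
  have hJt : deriv (fun τ => Jfun u v M r τ) t =
      M * (Real.exp (u r t) * deriv (u r) t) - Real.exp (v r t) * deriv (v r) t :=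
    (((hsol.reg_t_u r hr' t ht).hasDerivAt.exp.const_mul M).sub
      (hsol.reg_t_v r hr' t ht).hasDerivAt.exp).deriv
  have hJrr := (hasDerivWithinAt_J_r (M := M) hR hu hv hr').derivWithin
    (uniqueDiffOn_Icc hR r hr')
  have key : deriv (fun τ => Jfun u v M r τ) t
        - dr R (dr R (fun s => Jfun u v M s t)) r
        - ((n - 1 : ℝ) / r) * dr R (fun s => Jfun u v M s t) r
        - bfun u v M R r t * dr R (fun s => Jfun u v M s t) r
        - cfun u v M R r t * Jfun u v M r t
        = (lam1 * M - lam2) * Real.exp (u r t + v r t) := by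
    rw [show dr R (dr R (fun s => Jfun u v M s t)) r = _ from hJrr, hJt, bfun, cfun,
      dr_J hR hu hv hr', hsol.pde_u r hr t ht, hsol.pde_v r hr t ht, Jfun, Real.exp_add]
    have hE : Real.exp (u r t) ≠ 0 := Real.exp_ne_zero _
    have hMne : M ≠ 0 := ne_of_gt hM
    -- `(n - 1) / r` is kept as one symbol: the identity is linear in it.
    generalize ((n : ℝ) - 1) / r = k
    generalize Real.exp (u r t) = A at *
    generalize Real.exp (v r t) = B at *
    field_simp
    ring
  refine ⟨key, fun h => ?_⟩
  rw [key]
  have h2 : lam2 ≤ M * lam1 := (div_le_iff₀ hlam1).mp h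
  exact mul_nonneg (by linarith) (Real.exp_pos _).le
end
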